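/- arXiv:math/9311208 — 6 statements merged into one kernel-verified Lean document; each statement's English description precedes it below -/
import Mathlib

section
/- Let 0 < q < ∞ and let (a_k)_{k≥1} be a non-increasing sequence of positive real numbers with Σ_{k=1}^∞ a_k = ∞. Let c_00 denote the space of finitely supported real sequences equipped with ‖x‖_{w,q} = (Σ_{k=1}^∞ a_k (x_k^*)^q)^{1/q}, where x^* is the non-increasing rearrangement of (|x_1|, |x_2|, …) (which is eventually zero). Then there exist a measure space (Ω, Σ, μ) and a linear map T : c_00 → L_q(μ) with ∫_Ω |Tx|^q dμ = ‖x‖_{w,q}^q for all x ∈ c_00 if and only if the sequence (a_k) is constant. -/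
/-!
If the weights are constant, the Lorentz functional is `a 0 * ∑ |x i| ^ q`, and a multiple of counting
measure on `ℕ` works.

Conversely, let `N x = ∑ a_k (x_k^*) ^ q = ∫ |T x| ^ q`. Positivity of `N` makes `|T x| ^ q` integrable
for the vectors used below (`integrable_of_isometry`), although `T x` is not assumed measurable.

For `q ≥ 2`, Clarkson's inequality `|u + v| ^ q + |u - v| ^ q ≥ 2 |u| ^ q + 2 |v| ^ q`, applied to
`x = e_0 + ⋯ + e_{k-1}` and `y = e_k`, integrates to `a k ≥ a 0`.

For `0 < q < 2`, the kernel `|u - v| ^ q` is conditionally negative definite (`negType_abs_rpow`), hence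
so is `N (x - y)`. It is tested on points of the grid `{0, 1, 2, 3} ^ (M + 1)` with product coefficients
`∏ c_i (p_i)`, where each `c_i` has sum zero. By the layer-cake formula, on integer vectors `N` is a
combination over levels `w` of partial sums of the weights up to the number of coordinates exceeding
`w`. For each level the quadratic form factorizes, and the result (`tensor_ineq`) is
`0 ≤ Q * ∑_j (-1) ^ j (M choose j) a_j`, where `Q = ∑_w ((w + 1) ^ q - w ^ q) ∏_i P_i w` and
`P_i w` is the sum of `c_i r * c_i s` over `|r - s| ≤ w`.
Taking every `c_i = (1, -1, 0, 0)` gives `Q > 0`. Taking one factor `(1, -2, 1, 0)`, whose band sum is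
negative at `w = 1`, and `M` factors `(1, 1, -1, -1)`, whose band sum is largest at `w = 1`, gives
`Q < 0` for large `M`. Hence all high iterated differences of `a` vanish at `0`, so `a` is a polynomial
sequence; being convergent, it is constant.
-/

open MeasureTheory

/-- The non-increasing rearrangement of the sequence `(|x 0|, |x 1|, …)`:
`x^*_k = inf { s ≥ 0 : #{ i : |x i| > s } ≤ k }` (0-indexed). -/
noncomputable def seqStar (x : ℕ → ℝ) (k : ℕ) : ℝ :=
  sInf {s : ℝ | 0 ≤ s ∧ Nat.card {i : ℕ | s < |x i|} ≤ k}

/-! ### Two inequalities for powers of absolute values -/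

lemma integrableOn_one_sub_cos {q : ℝ} (hq : 0 < q) (hq2 : q < 2) :
    IntegrableOn (fun ξ : ℝ => (1 - Real.cos ξ) * ξ ^ (-1 - q)) (Set.Ioi 0) := by
  have hmeas : Measurable (fun ξ : ℝ => (1 - Real.cos ξ) * ξ ^ (-1 - q)) := by fun_prop
  rw [← Set.Ioc_union_Ioi_eq_Ioi (zero_le_one (α := ℝ))]
  refine IntegrableOn.union ?_ ?_
  · have h : IntegrableOn (fun ξ : ℝ => ξ ^ (1 - q)) (Set.Ioc 0 1) :=
      (intervalIntegrable_iff_integrableOn_Ioc_of_le zero_le_one).1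
        (intervalIntegral.intervalIntegrable_rpow' (by linarith))
    refine Integrable.mono' h hmeas.aestronglyMeasurable ?_
    refine (ae_restrict_iff' measurableSet_Ioc).2 (Filter.Eventually.of_forall fun ξ hξ => ?_)
    have h1 := Real.one_sub_sq_div_two_le_cos (x := ξ)
    have h2 : (0 : ℝ) < ξ ^ (-1 - q) := Real.rpow_pos_of_pos hξ.1 _
    have h3 : ξ ^ (1 - q) = ξ ^ 2 * ξ ^ (-1 - q) := by
      rw [← Real.rpow_natCast, ← Real.rpow_add hξ.1]; congr 1; push_cast; ring
    rw [Real.norm_of_nonneg (mul_nonneg (by linarith [Real.cos_le_one ξ]) h2.le), h3]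
    gcongr
    nlinarith [sq_nonneg ξ]
  · have h := (integrableOn_Ioi_rpow_of_lt (a := -1 - q) (by linarith) one_pos).const_mul 2
    refine Integrable.mono' h hmeas.aestronglyMeasurable ?_
    refine (ae_restrict_iff' measurableSet_Ioi).2 (Filter.Eventually.of_forall fun ξ hξ => ?_)
    have h2 : (0 : ℝ) < ξ ^ (-1 - q) := Real.rpow_pos_of_pos (one_pos.trans hξ) _
    rw [Real.norm_of_nonneg (mul_nonneg (by linarith [Real.cos_le_one ξ]) h2.le)]
    gcongr
    linarith [Real.neg_one_le_cos ξ]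

lemma integral_one_sub_cos_pos {q : ℝ} (hq : 0 < q) (hq2 : q < 2) :
    0 < ∫ ξ in Set.Ioi (0 : ℝ), (1 - Real.cos ξ) * ξ ^ (-1 - q) := by
  have hnn : 0 ≤ᵐ[volume.restrict (Set.Ioi (0 : ℝ))]
      fun ξ : ℝ => (1 - Real.cos ξ) * ξ ^ (-1 - q) := by
    refine (ae_restrict_iff' measurableSet_Ioi).2 (Filter.Eventually.of_forall fun ξ hξ => ?_)
    exact mul_nonneg (by linarith [Real.cos_le_one ξ]) (Real.rpow_nonneg (le_of_lt hξ) _)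
  rw [setIntegral_pos_iff_support_of_nonneg_ae hnn (integrableOn_one_sub_cos hq hq2)]
  have hsub : Set.Ioo (0 : ℝ) 1 ⊆
      Function.support (fun ξ : ℝ => (1 - Real.cos ξ) * ξ ^ (-1 - q)) ∩ Set.Ioi 0 := by
    intro ξ hξ
    refine ⟨?_, hξ.1⟩
    have h1 : Real.cos ξ < 1 := by
      rw [← Real.cos_zero]
      exact Real.cos_lt_cos_of_nonneg_of_le_pi le_rfl (by linarith [hξ.2, Real.pi_gt_three]) hξ.1
    exact mul_ne_zero (by linarith) (Real.rpow_pos_of_pos hξ.1 _).ne'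
  refine lt_of_lt_of_le ?_ (measure_mono hsub)
  simp

/-- The representation `|u| ^ q = K⁻¹ ∫ (1 - cos (u ξ)) ξ ^ (-1 - q) dξ` over `ξ > 0`, obtained by
scaling. -/
lemma one_sub_cos_scaled {q : ℝ} (hq : 0 < q) (hq2 : q < 2) (u : ℝ) :
    IntegrableOn (fun ξ : ℝ => (1 - Real.cos (u * ξ)) * ξ ^ (-1 - q)) (Set.Ioi 0) ∧
    ∫ ξ in Set.Ioi (0 : ℝ), (1 - Real.cos (u * ξ)) * ξ ^ (-1 - q) =
      |u| ^ q * ∫ ξ in Set.Ioi (0 : ℝ), (1 - Real.cos ξ) * ξ ^ (-1 - q) := by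
  rcases eq_or_ne u 0 with rfl | hu
  · simp [Real.zero_rpow hq.ne']
  have hb : 0 < |u| := abs_pos.2 hu
  have hcongr : ∀ ξ ∈ Set.Ioi (0 : ℝ), (1 - Real.cos (u * ξ)) * ξ ^ (-1 - q) =
      |u| ^ (1 + q) * ((1 - Real.cos (|u| * ξ)) * (|u| * ξ) ^ (-1 - q)) := by
    intro ξ hξ
    have hξ' : (0 : ℝ) < ξ := hξ
    have h1 : Real.cos (u * ξ) = Real.cos (|u| * ξ) := by
      rw [← Real.cos_abs (u * ξ), abs_mul, abs_of_pos hξ']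
    have h2 : |u| ^ (1 + q) * |u| ^ (-1 - q) = 1 := by
      rw [← Real.rpow_add hb]; simp
    rw [h1, Real.mul_rpow hb.le hξ'.le]
    linear_combination (-(1 - Real.cos (|u| * ξ)) * ξ ^ (-1 - q)) * h2
  constructor
  · rw [integrableOn_congr_fun hcongr measurableSet_Ioi]
    have h := (integrableOn_Ioi_comp_mul_left_iff
      (fun ξ : ℝ => (1 - Real.cos ξ) * ξ ^ (-1 - q)) 0 hb).2
      (by simpa using integrableOn_one_sub_cos hq hq2)
    exact h.const_mul _
  · rw [setIntegral_congr_fun measurableSet_Ioi hcongr, integral_const_mul,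
      integral_comp_mul_left_Ioi (fun ξ : ℝ => (1 - Real.cos ξ) * ξ ^ (-1 - q)) 0 hb,
      mul_zero, smul_eq_mul, ← mul_assoc]
    congr 1
    rw [Real.rpow_add hb, Real.rpow_one]
    field_simp

/-- For `0 < q < 2` the kernel `|u - v| ^ q` on the line is conditionally negative definite. -/
lemma negType_abs_rpow {q : ℝ} (hq : 0 < q) (hq2 : q < 2) {ι : Type*} [Fintype ι]
    (c u : ι → ℝ) (hc : ∑ i, c i = 0) :
    ∑ i, ∑ j, c i * c j * |u i - u j| ^ q ≤ 0 := by
  set K := ∫ ξ in Set.Ioi (0 : ℝ), (1 - Real.cos ξ) * ξ ^ (-1 - q) with hK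
  have hKpos : 0 < K := integral_one_sub_cos_pos hq hq2
  have key : (∑ i, ∑ j, c i * c j * |u i - u j| ^ q) * K =
      ∫ ξ in Set.Ioi (0 : ℝ), ∑ i, ∑ j,
        c i * c j * ((1 - Real.cos ((u i - u j) * ξ)) * ξ ^ (-1 - q)) := by
    have hint : ∀ i j, IntegrableOn (fun ξ : ℝ =>
        c i * c j * ((1 - Real.cos ((u i - u j) * ξ)) * ξ ^ (-1 - q))) (Set.Ioi 0) :=
      fun i j => (one_sub_cos_scaled hq hq2 (u i - u j)).1.const_mul _
    rw [integral_finsetSum _ fun i _ => integrable_finsetSum _ fun j _ => hint i j, Finset.sum_mul]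
    refine Finset.sum_congr rfl fun i _ => ?_
    rw [integral_finsetSum _ fun j _ => hint i j, Finset.sum_mul]
    refine Finset.sum_congr rfl fun j _ => ?_
    rw [integral_const_mul, (one_sub_cos_scaled hq hq2 (u i - u j)).2, mul_assoc]
  have hle : (∑ i, ∑ j, c i * c j * |u i - u j| ^ q) * K ≤ 0 := by
    rw [key]
    refine setIntegral_nonpos measurableSet_Ioi fun ξ hξ => ?_
    -- since `∑ c i = 0`, the double sum is `-|∑ c i exp (I * u i * ξ)|² * ξ ^ (-1 - q)`
    have hsq : ∑ i, ∑ j, c i * c j * ((1 - Real.cos ((u i - u j) * ξ)) * ξ ^ (-1 - q)) =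
        ((∑ i, c i) * (∑ j, c j) - (∑ i, c i * Real.cos (u i * ξ)) * (∑ j, c j * Real.cos (u j * ξ))
          - (∑ i, c i * Real.sin (u i * ξ)) * (∑ j, c j * Real.sin (u j * ξ)))
          * ξ ^ (-1 - q) := by
      rw [Finset.sum_mul_sum, Finset.sum_mul_sum, Finset.sum_mul_sum]
      simp only [← Finset.sum_sub_distrib, Finset.sum_mul]
      refine Finset.sum_congr rfl fun i _ => Finset.sum_congr rfl fun j _ => ?_
      rw [sub_mul (u i), Real.cos_sub]; ring
    rw [hsq, hc]
    refine mul_nonpos_of_nonpos_of_nonneg ?_ (Real.rpow_nonneg (le_of_lt hξ) _)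
    nlinarith [mul_self_nonneg (∑ i, c i * Real.cos (u i * ξ)),
      mul_self_nonneg (∑ i, c i * Real.sin (u i * ξ))]
  exact nonpos_of_mul_nonpos_left hle hKpos

/-- Clarkson's inequality for real numbers. -/
lemma clarkson {q : ℝ} (hq : 2 ≤ q) (u v : ℝ) :
    2 * |u| ^ q + 2 * |v| ^ q ≤ |u + v| ^ q + |u - v| ^ q := by
  have hsq : ∀ t : ℝ, |t| ^ q = (t ^ 2) ^ (q / 2) := by
    intro t
    rw [← sq_abs, ← Real.rpow_natCast, ← Real.rpow_mul (abs_nonneg t)]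
    congr 1; push_cast; ring
  have hp : 1 ≤ q / 2 := by linarith
  simp only [hsq]
  have h1 := Real.add_rpow_le_rpow_add (sq_nonneg u) (sq_nonneg v) hp
  have h2 := (convexOn_rpow hp).2 (Set.mem_Ici.2 (sq_nonneg (u + v)))
    (Set.mem_Ici.2 (sq_nonneg (u - v)))
    (show (0 : ℝ) ≤ 1 / 2 by norm_num) (show (0 : ℝ) ≤ 1 / 2 by norm_num) (by norm_num)
  have h3 : (1 / 2 : ℝ) • (u + v) ^ 2 + (1 / 2 : ℝ) • (u - v) ^ 2 = u ^ 2 + v ^ 2 := by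
    simp only [smul_eq_mul]; ring
  rw [h3] at h2
  simp only [smul_eq_mul] at h2
  linarith

/-! ### Computing the non-increasing rearrangement -/

lemma finite_lt_abs (x : ℕ →₀ ℝ) {s : ℝ} (hs : 0 ≤ s) : {i : ℕ | s < |x i|}.Finite := by
  refine x.support.finite_toSet.subset fun i hi => ?_
  have h : s < |x i| := hi
  have : 0 < |x i| := hs.trans_lt h
  simpa using abs_pos.1 this

lemma seqStar_eq (x : ℕ → ℝ) (k : ℕ) (s : ℝ) (hs : 0 ≤ s)
    (h1 : Nat.card {i : ℕ | s < |x i|} ≤ k)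
    (h2 : ∀ t, 0 ≤ t → t < s → k < Nat.card {i : ℕ | t < |x i|}) : seqStar x k = s := by
  refine IsLeast.csInf_eq ⟨⟨hs, h1⟩, fun t ht => ?_⟩
  by_contra hlt
  exact absurd ht.2 (not_le.2 (h2 t ht.1 (not_le.1 hlt)))

/-- Rearranging does not change the `ℓ_q` sum. -/
lemma tsum_seqStar_rpow {q : ℝ} (hq : 0 < q) (x : ℕ →₀ ℝ) :
    ∑' k, seqStar (⇑x) k ^ q = ∑' i, |x i| ^ q := by
  obtain ⟨n, hn⟩ : ∃ n, ∀ i, n ≤ i → x i = 0 := by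
    refine ⟨x.support.sup id + 1, fun i hi => ?_⟩
    by_contra h
    have := Finset.le_sup (f := id) (Finsupp.mem_support_iff.2 h)
    simp only [id] at this
    omega
  set f : Fin n → ℝ := fun i => -|x i| with hf
  set σ := Tuple.sort f with hσ
  have hmono : ∀ i j : Fin n, i ≤ j → |x (σ j)| ≤ |x (σ i)| := by
    intro i j hij
    have := Tuple.monotone_sort f hij
    simp only [Function.comp, hf] at this
    linarith
  have hlt : ∀ k : Fin n, seqStar (⇑x) k = |x (σ k)| := by
    intro k
    refine seqStar_eq _ _ _ (abs_nonneg _) ?_ ?_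
    · have hsub : {i : ℕ | |x (σ k)| < |x i|} ⊆
          ((Finset.Iio k).image fun j => ((σ j : Fin n) : ℕ) : Finset ℕ) := by
        intro i hi
        have hi' : |x (σ k)| < |x i| := hi
        have hin : i < n := by
          by_contra h
          rw [hn i (not_lt.1 h)] at hi'
          simp only [abs_zero] at hi'
          exact absurd (abs_nonneg (x (σ k))) (not_le.2 hi')
        simp only [Finset.coe_image, Set.mem_image, Finset.coe_Iio, Set.mem_Iio]
        refine ⟨σ.symm ⟨i, hin⟩, ?_, by simp⟩
        by_contra h
        have := hmono _ _ (not_lt.1 h)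
        simp only [Equiv.apply_symm_apply] at this
        linarith
      calc _ ≤ Nat.card (((Finset.Iio k).image fun j => ((σ j : Fin n) : ℕ) : Finset ℕ) : Set ℕ) :=
            Nat.card_mono (Finset.finite_toSet _) hsub
        _ ≤ k := by
            rw [Nat.card_coe_set_eq, Set.ncard_coe_finset]
            exact Finset.card_image_le.trans (by simp)
    · intro t ht0 ht
      have hsub : (((Finset.Iic k).image fun j => ((σ j : Fin n) : ℕ) : Finset ℕ) : Set ℕ) ⊆
          {i : ℕ | t < |x i|} := by
        intro i hi
        simp only [Finset.coe_image, Set.mem_image, Finset.coe_Iic, Set.mem_Iic] at hi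
        obtain ⟨j, hj, rfl⟩ := hi
        exact ht.trans_le (hmono _ _ hj)
      have := Nat.card_mono (finite_lt_abs x ht0) hsub
      rw [Nat.card_coe_set_eq, Set.ncard_coe_finset, Finset.card_image_of_injective _
        (fun i j h => σ.injective (Fin.val_injective h)), Fin.card_Iic] at this
      omega
  have hge : ∀ k, n ≤ k → seqStar (⇑x) k = 0 := by
    intro k hk
    refine seqStar_eq _ _ _ le_rfl ?_ fun t h1 h2 => absurd h1 (not_le.2 h2)
    have hsub : {i : ℕ | 0 < |x i|} ⊆ (Finset.range n : Set ℕ) := by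
      intro i hi
      by_contra h
      have hi' : 0 < |x i| := hi
      rw [hn i (by simpa using h)] at hi'
      simp at hi'
    have := Nat.card_mono (Finset.finite_toSet _) hsub
    rw [Nat.card_coe_set_eq (Finset.range n : Set ℕ), Set.ncard_coe_finset, Finset.card_range] at this
    exact this.trans hk
  rw [tsum_eq_sum (s := Finset.range n), tsum_eq_sum (s := Finset.range n),
    Finset.sum_range, Finset.sum_range]
  · simp only [hlt]
    exact Equiv.sum_comp σ fun i : Fin n => |x i| ^ q
  · intro i hi
    rw [hn i (by simpa using hi), abs_zero, Real.zero_rpow hq.ne']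
  · intro i hi
    rw [hge i (by simpa using hi), Real.zero_rpow hq.ne']

/-- Layer-cake formula for the Lorentz functional at a sequence with natural-number absolute values:
each level `w` contributes `(w + 1) ^ q - w ^ q` times the sum of the first `#{i : w < |x i|}`
weights. -/
lemma tsum_seqStar_of_nat {q : ℝ} (hq : 0 < q) (a : ℕ → ℝ) (x : ℕ →₀ ℝ) (m : ℕ → ℕ) (W : ℕ)
    (hm : ∀ i, |x i| = m i) (hW : ∀ i, m i ≤ W) :
    ∑' k, a k * seqStar (⇑x) k ^ q =
      ∑ w ∈ Finset.range W, (((w + 1 : ℕ) : ℝ) ^ q - (w : ℝ) ^ q) *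
        ∑ k ∈ Finset.range (Nat.card {i : ℕ | w < m i}), a k := by
  have hfin : ∀ w : ℕ, {i : ℕ | w < m i}.Finite := by
    intro w
    refine (finite_lt_abs x (Nat.cast_nonneg w)).subset fun i hi => ?_
    have : w < m i := hi
    simp only [Set.mem_ofPred_eq, hm]
    exact_mod_cast this
  have hanti : ∀ v w : ℕ, v ≤ w →
      Nat.card {i : ℕ | w < m i} ≤ Nat.card {i : ℕ | v < m i} := fun v w h =>
    Nat.card_mono (hfin v) fun i hi => lt_of_le_of_lt h hi
  have hstar : ∀ k, seqStar (⇑x) k ^ q = ∑ w ∈ Finset.range W,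
      if k < Nat.card {i : ℕ | w < m i} then (((w + 1 : ℕ) : ℝ) ^ q - (w : ℝ) ^ q) else 0 := by
    intro k
    have hex : ∃ w, Nat.card {i : ℕ | w < m i} ≤ k := by
      refine ⟨W, ?_⟩
      have : {i : ℕ | W < m i} = ∅ := by
        ext i; simpa using hW i
      rw [this]; simp
    classical
    set w₀ := Nat.find hex with hw₀
    have hspec : Nat.card {i : ℕ | w₀ < m i} ≤ k := Nat.find_spec hex
    have hmin : ∀ w, w < w₀ → k < Nat.card {i : ℕ | w < m i} := fun w hw =>
      not_le.1 (Nat.find_min hex hw)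
    have hw₀W : w₀ ≤ W := by
      refine Nat.find_min' hex ?_
      have : {i : ℕ | W < m i} = ∅ := by
        ext i; simpa using hW i
      rw [this]; simp
    have hiff : ∀ w, k < Nat.card {i : ℕ | w < m i} ↔ w < w₀ := by
      intro w
      refine ⟨fun h => ?_, hmin w⟩
      by_contra hc
      exact absurd (h.trans_le (hanti _ _ (not_lt.1 hc))) (not_lt.2 hspec)
    have hval : seqStar (⇑x) k = w₀ := by
      refine seqStar_eq _ _ _ (Nat.cast_nonneg _) ?_ ?_
      · simpa [hm] using hspec
      · intro t ht0 ht
        rcases Nat.eq_zero_or_pos w₀ with h0 | h0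
        · rw [h0] at ht; simp only [Nat.cast_zero] at ht; linarith
        · refine (hmin (w₀ - 1) (by omega)).trans_le
            (Nat.card_mono (finite_lt_abs x ht0) fun i hi => ?_)
          have hi' : w₀ - 1 < m i := hi
          have : w₀ ≤ m i := by omega
          simp only [Set.mem_ofPred_eq, hm]
          exact ht.trans_le (by exact_mod_cast this)
    simp only [hiff]
    rw [hval, ← Finset.sum_filter]
    have : (Finset.range W).filter (fun w => w < w₀) = Finset.range w₀ := by
      ext w; simp; omega
    rw [this, Finset.sum_range_sub (fun w : ℕ => (w : ℝ) ^ q)]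
    simp [Real.zero_rpow hq.ne']
  simp only [hstar]
  rw [tsum_eq_sum (s := Finset.range (Nat.card {i : ℕ | 0 < m i}))]
  · simp only [Finset.mul_sum]
    rw [Finset.sum_comm]
    refine Finset.sum_congr rfl fun w _ => ?_
    simp only [mul_ite, mul_zero]
    rw [← Finset.sum_filter]
    have : (Finset.range (Nat.card {i : ℕ | 0 < m i})).filter
        (fun k => k < Nat.card {i : ℕ | w < m i}) =
        Finset.range (Nat.card {i : ℕ | w < m i}) := by
      ext k
      simp only [Finset.mem_filter, Finset.mem_range, and_iff_right_iff_imp]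
      exact fun h => h.trans_le (hanti 0 w (Nat.zero_le _))
    rw [this]
    exact Finset.sum_congr rfl fun k _ => mul_comm _ _
  · intro k hk
    rw [Finset.sum_eq_zero, mul_zero]
    intro w _
    rw [if_neg]
    intro h
    exact hk (Finset.mem_range.2 (h.trans_le (hanti 0 w (Nat.zero_le _))))

/-! ### Iterated differences -/

/-- The backward-signed difference `A n - A (n + 1)`, so that `negDiff^[M] A 0` is the alternating
binomial sum `∑ (-1) ^ j * M.choose j * A j`. -/
def negDiff (A : ℕ → ℝ) (n : ℕ) : ℝ := A n - A (n + 1)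

lemma iterate_negDiff_eq_zero_of_tail {a : ℕ → ℝ} {M : ℕ}
    (h : ∀ n, M ≤ n → negDiff^[n] a 0 = 0) (k : ℕ) : ∀ n, M ≤ n → negDiff^[n] a k = 0 := by
  induction k with
  | zero => exact h
  | succ k ih =>
    intro n hn
    have h1 := ih (n + 1) (by omega)
    rw [Function.iterate_succ_apply'] at h1
    simp only [negDiff] at h1
    linarith [ih n hn]

lemma tendsto_iterate_negDiff {a : ℕ → ℝ} {l : ℝ}
    (ha : Filter.Tendsto a Filter.atTop (nhds l)) (n : ℕ) :
    Filter.Tendsto (negDiff^[n + 1] a) Filter.atTop (nhds 0) := by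
  have step : ∀ (b : ℕ → ℝ) (r : ℝ), Filter.Tendsto b Filter.atTop (nhds r) →
      Filter.Tendsto (negDiff b) Filter.atTop (nhds 0) := by
    intro b r hb
    have h := hb.sub (hb.comp (Filter.tendsto_add_atTop_nat 1))
    rw [sub_self] at h
    exact h
  induction n with
  | zero => exact step a l ha
  | succ n ih =>
    rw [Function.iterate_succ_apply']
    exact step _ 0 ih

/-- A convergent sequence annihilated by an iterated difference (that is, a polynomial sequence) is
constant. -/
lemma const_of_iterate_negDiff {a : ℕ → ℝ} {l : ℝ}
    (ha : Filter.Tendsto a Filter.atTop (nhds l)) (M : ℕ)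
    (h : ∀ k, negDiff^[M + 1] a k = 0) (k : ℕ) : a k = a 0 := by
  have const : ∀ b : ℕ → ℝ, (∀ k, negDiff b k = 0) → ∀ k, b k = b 0 := by
    intro b hb k
    induction k with
    | zero => rfl
    | succ k ih =>
      have := hb k
      simp only [negDiff] at this
      linarith
  induction M with
  | zero => exact const a h k
  | succ M ih =>
    refine ih fun k => ?_
    rw [Function.iterate_succ_apply'] at h
    have hc := const _ h
    have hl : Filter.Tendsto (negDiff^[M + 1] a) Filter.atTop (nhds (negDiff^[M + 1] a 0)) :=
      tendsto_const_nhds.congr fun k => (hc k).symm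
    rw [hc k]
    exact tendsto_nhds_unique hl (tendsto_iterate_negDiff ha M)

lemma negDiff_sub (A B : ℕ → ℝ) (n : ℕ) :
    negDiff^[n] (fun k => A k - B k) 0 = negDiff^[n] A 0 - negDiff^[n] B 0 := by
  induction n generalizing A B with
  | zero => rfl
  | succ n ih =>
    simp only [Function.iterate_succ_apply]
    rw [← ih]
    have h : negDiff (fun k => A k - B k) = fun k => negDiff A k - negDiff B k := by
      ext k
      simp only [negDiff]; ring
    rw [h]

lemma iterate_negDiff_neg (a : ℕ → ℝ) (n : ℕ) (k : ℕ) :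
    negDiff^[n] (fun k => -a k) k = -negDiff^[n] a k := by
  induction n generalizing k with
  | zero => rfl
  | succ n ih =>
    simp only [Function.iterate_succ_apply']
    rw [negDiff, negDiff, ih, ih]; ring

/-- The sum over a product set of a product weight times a function `A` of the number of coordinates
satisfying `R` factorizes when every factor has total weight zero. In each coordinate the weight of
`R` is minus the weight of `¬ R`, so one coordinate turns `A` into a multiple of `negDiff A`. -/
lemma sum_prod_mul_card {β : Type*} [Fintype β] (R : β → Prop) [DecidablePred R] (M : ℕ)
    (κ : Fin M → β → ℝ) (hκ : ∀ i, ∑ b, κ i b = 0) (A : ℕ → ℝ) :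
    ∑ z : Fin M → β, (∏ i, κ i (z i)) * A (Finset.univ.filter fun i => R (z i)).card =
      (∏ i, ∑ b, if R b then 0 else κ i b) * negDiff^[M] A 0 := by
  induction M generalizing A with
  | zero => simp
  | succ M ih =>
    rw [← (Fin.consEquiv fun _ => β).sum_comp, Fintype.sum_prod_type]
    have hstep : ∀ b : β, ∑ z : Fin M → β, (∏ i, κ i ((Fin.consEquiv fun _ => β) (b, z) i)) *
        A (Finset.univ.filter fun i => R ((Fin.consEquiv fun _ => β) (b, z) i)).card =
        (if R b then 0 else κ 0 b) *
          ((∏ i : Fin M, ∑ b, if R b then 0 else κ i.succ b) * negDiff^[M] A 0) +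
        (κ 0 b - if R b then 0 else κ 0 b) *
          ((∏ i : Fin M, ∑ b, if R b then 0 else κ i.succ b) *
            negDiff^[M] (fun n => A (n + 1)) 0) := by
      intro b
      rw [← ih (fun i => κ i.succ) (fun i => hκ i.succ) A,
        ← ih (fun i => κ i.succ) (fun i => hκ i.succ) (fun n => A (n + 1)),
        Finset.mul_sum, Finset.mul_sum, ← Finset.sum_add_distrib]
      refine Finset.sum_congr rfl fun z _ => ?_
      rw [Fin.prod_univ_succ, Fin.card_filter_univ_succ]
      simp only [Fin.consEquiv, Equiv.coe_fn_mk, Fin.cons_zero, Fin.cons_succ]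
      by_cases hR : R b <;> simp [hR] <;> ring
    rw [Finset.sum_congr rfl fun b _ => hstep b, Finset.sum_add_distrib, ← Finset.sum_mul,
      ← Finset.sum_mul, Finset.sum_sub_distrib, hκ 0, Fin.prod_univ_succ,
      Function.iterate_succ_apply]
    have : negDiff A = fun k => A k - A (k + 1) := rfl
    rw [this, negDiff_sub]
    ring

/-! ### The Lorentz functional on finite-dimensional subspaces -/

/-- The inclusion of `ℝ ^ M` into the finitely supported sequences, as the first `M` coordinates. -/
noncomputable def finEmb (M : ℕ) : (Fin M → ℝ) →ₗ[ℝ] (ℕ →₀ ℝ) :=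
  (Finsupp.lmapDomain ℝ ℝ (Fin.val : Fin M → ℕ)) ∘ₗ
    (Finsupp.linearEquivFunOnFinite ℝ ℝ (Fin M)).symm.toLinearMap

lemma finEmb_apply_lt {M : ℕ} (v : Fin M → ℝ) (i : Fin M) : finEmb M v i = v i := by
  simp only [finEmb, LinearMap.comp_apply, Finsupp.lmapDomain_apply]
  rw [Finsupp.mapDomain_apply Fin.val_injective]
  simp

lemma finEmb_apply_ge {M : ℕ} (v : Fin M → ℝ) {i : ℕ} (hi : M ≤ i) : finEmb M v i = 0 := by
  simp only [finEmb, LinearMap.comp_apply, Finsupp.lmapDomain_apply]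
  rw [Finsupp.mapDomain_of_notMem_range]
  rintro ⟨j, rfl⟩
  exact absurd j.2 (not_lt.2 hi)

lemma tsum_seqStar_finEmb {q : ℝ} (hq : 0 < q) (a : ℕ → ℝ) {M : ℕ} (v : Fin M → ℝ)
    (m : Fin M → ℕ) (W : ℕ) (hm : ∀ i, |v i| = m i) (hW : ∀ i, m i ≤ W) :
    ∑' k, a k * seqStar (⇑(finEmb M v)) k ^ q =
      ∑ w ∈ Finset.range W, (((w + 1 : ℕ) : ℝ) ^ q - (w : ℝ) ^ q) *
        ∑ k ∈ Finset.range (Finset.univ.filter fun i => w < m i).card, a k := by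
  rw [tsum_seqStar_of_nat hq a (finEmb M v) (fun i => if h : i < M then m ⟨i, h⟩ else 0) W]
  · refine Finset.sum_congr rfl fun w _ => ?_
    have hset : {i : ℕ | w < if h : i < M then m ⟨i, h⟩ else 0} =
        (((Finset.univ.filter fun i => w < m i).map Fin.valEmbedding : Finset ℕ) : Set ℕ) := by
      ext i
      by_cases h : i < M
      · simp only [Set.mem_ofPred_eq, h, dif_pos, Finset.coe_map, Set.mem_image]
        constructor
        · intro hw
          exact ⟨⟨i, h⟩, by simpa using hw, rfl⟩
        · rintro ⟨j, hj, rfl⟩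
          simpa using hj
      · simp only [Set.mem_ofPred_eq, h, dif_neg, not_false_eq_true, Finset.coe_map, Set.mem_image]
        constructor
        · intro hw
          exact absurd hw (Nat.not_lt_zero _)
        · rintro ⟨j, hj, rfl⟩
          exact absurd j.2 h
    rw [hset, Nat.card_coe_set_eq, Set.ncard_coe_finset, Finset.card_map]
  · intro i
    by_cases h : i < M
    · have := finEmb_apply_lt v ⟨i, h⟩
      simp only at this
      simp [h, this, hm]
    · simp [h, finEmb_apply_ge v (not_lt.1 h)]
  · intro i
    by_cases h : i < M <;> simp [h, hW]

/-- The power `|T x| ^ q` is integrable for integer-valued `x`: otherwise its Bochner integral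
would be zero, while the Lorentz functional is positive at nonzero `x`. -/
lemma integrable_of_isometry {q : ℝ} (hq : 0 < q) {a : ℕ → ℝ} (hpos : ∀ k, 0 < a k)
    {Ω : Type} [MeasurableSpace Ω] {μ : Measure Ω} (T : (ℕ →₀ ℝ) →ₗ[ℝ] (Ω → ℝ))
    (hT : ∀ x : ℕ →₀ ℝ, (∫ ω, |T x ω| ^ q ∂μ) = ∑' k, a k * seqStar (⇑x) k ^ q)
    {M : ℕ} (v : Fin M → ℝ) (m : Fin M → ℕ) (hm : ∀ i, |v i| = m i) :
    Integrable (fun ω => |T (finEmb M v) ω| ^ q) μ := by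
  by_cases hv : v = 0
  · subst hv
    simp [Real.zero_rpow hq.ne']
  by_contra hint
  obtain ⟨i, hi⟩ : ∃ i, v i ≠ 0 := by
    by_contra h
    push Not at h
    exact hv (funext h)
  have hmi : 0 < m i := by
    have : (0 : ℝ) < m i := hm i ▸ abs_pos.2 hi
    exact_mod_cast this
  set W := Finset.univ.sup m with hWdef
  have hW : ∀ i, m i ≤ W := fun i => Finset.le_sup (Finset.mem_univ i)
  have h0 := hT (finEmb M v)
  rw [integral_undef hint, tsum_seqStar_finEmb hq a v m W hm hW] at h0
  refine absurd h0 (ne_of_lt ?_)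
  have hg : ∀ w : ℕ, (0 : ℝ) < ((w + 1 : ℕ) : ℝ) ^ q - (w : ℝ) ^ q := fun w =>
    sub_pos.2 (Real.rpow_lt_rpow (Nat.cast_nonneg _) (by simp) hq)
  refine Finset.sum_pos' (fun w _ => mul_nonneg (hg w).le
    (Finset.sum_nonneg fun k _ => (hpos k).le)) ⟨0, ?_, ?_⟩
  · exact Finset.mem_range.2 (hmi.trans_le (hW i))
  · refine mul_pos (hg 0) (Finset.sum_pos (fun k _ => hpos k) ?_)
    rw [Finset.nonempty_range_iff]
    exact Finset.card_ne_zero.2 ⟨i, by simpa using hmi⟩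

/-! ### Necessity -/

/-- For `q ≥ 2`, apply Clarkson's inequality to `T x` and `T y`, where `x` is the sum of the first
`k` unit vectors and `y` is the next one. -/
lemma const_of_two_le {q : ℝ} (hq : 2 ≤ q) {a : ℕ → ℝ} (hpos : ∀ k, 0 < a k)
    {Ω : Type} [MeasurableSpace Ω] {μ : Measure Ω} (T : (ℕ →₀ ℝ) →ₗ[ℝ] (Ω → ℝ))
    (hT : ∀ x : ℕ →₀ ℝ, (∫ ω, |T x ω| ^ q ∂μ) = ∑' k, a k * seqStar (⇑x) k ^ q) (k : ℕ) :
    a 0 ≤ a k := by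
  have hq0 : 0 < q := by linarith
  have hval : ∀ (v : Fin (k + 1) → ℝ) (m : Fin (k + 1) → ℕ), (∀ i, |v i| = m i) →
      (∀ i, m i ≤ 1) → (∫ ω, |T (finEmb _ v) ω| ^ q ∂μ) =
        ∑ k ∈ Finset.range (Finset.univ.filter fun i => 0 < m i).card, a k := by
    intro v m hm hm1
    rw [hT, tsum_seqStar_finEmb hq0 a v m 1 hm hm1]
    simp [Real.zero_rpow hq0.ne']
  set x : Fin (k + 1) → ℝ := Fin.snoc (fun _ => 1) 0 with hx
  set y : Fin (k + 1) → ℝ := Fin.snoc (fun _ => 0) 1 with hy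
  set mx : Fin (k + 1) → ℕ := Fin.snoc (fun _ => 1) 0 with hmx
  set my : Fin (k + 1) → ℕ := Fin.snoc (fun _ => 0) 1 with hmy
  have e1 : ∀ i, |x i| = mx i := fun i => by
    refine Fin.lastCases ?_ (fun j => ?_) i <;> simp [hx, hmx]
  have e2 : ∀ i, |y i| = my i := fun i => by
    refine Fin.lastCases ?_ (fun j => ?_) i <;> simp [hy, hmy]
  have e3 : ∀ i, |(x + y) i| = ((1 : ℕ) : ℝ) := fun i => by
    refine Fin.lastCases ?_ (fun j => ?_) i <;> simp [hx, hy]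
  have e4 : ∀ i, |(x - y) i| = ((1 : ℕ) : ℝ) := fun i => by
    refine Fin.lastCases ?_ (fun j => ?_) i <;> simp [hx, hy]
  have b1 : ∀ i, mx i ≤ 1 := fun i => by
    refine Fin.lastCases ?_ (fun j => ?_) i <;> simp [hmx]
  have b2 : ∀ i, my i ≤ 1 := fun i => by
    refine Fin.lastCases ?_ (fun j => ?_) i <;> simp [hmy]
  have c1 : (Finset.univ.filter fun i => 0 < mx i).card = k := by
    rw [Finset.card_filter, Fin.sum_univ_castSucc]
    simp [hmx]
  have c2 : (Finset.univ.filter fun i => 0 < my i).card = 1 := by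
    rw [Finset.card_filter, Fin.sum_univ_castSucc]
    simp [hmy]
  have i1 := integrable_of_isometry hq0 hpos T hT x mx e1
  have i2 := integrable_of_isometry hq0 hpos T hT y my e2
  have i3 := integrable_of_isometry hq0 hpos T hT (x + y) (fun _ => 1) e3
  have i4 := integrable_of_isometry hq0 hpos T hT (x - y) (fun _ => 1) e4
  have hle := integral_mono ((i1.const_mul 2).add (i2.const_mul 2)) (i3.add i4) fun ω => by
    have := clarkson hq (T (finEmb _ x) ω) (T (finEmb _ y) ω)
    simpa [map_add, map_sub] using this
  simp only [Pi.add_apply] at hle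
  rw [integral_add (i1.const_mul 2) (i2.const_mul 2), integral_add i3 i4, integral_const_mul,
    integral_const_mul, hval x mx e1 b1, hval y my e2 b2,
    hval (x + y) (fun _ => 1) e3 (fun _ => le_rfl),
    hval (x - y) (fun _ => 1) e4 (fun _ => le_rfl), c1, c2] at hle
  simp [Finset.sum_range_succ] at hle
  linarith

/-- The band sum `∑ c i * c j` over `|i - j| ≤ w` of the autocorrelation of a coefficient vector `c`
attached to the four grid points `0, 1, 2, 3`. -/
def autoSum (c : Fin 4 → ℝ) (w : ℕ) : ℝ :=
  ∑ b : Fin 4 × Fin 4, if w < Nat.dist b.1 b.2 then 0 else c b.1 * c b.2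

/-- Negative definiteness of the Lorentz functional, tested on the grid `{0, 1, 2, 3} ^ (M + 1)` with
product coefficients: the layer-cake formula and `sum_prod_mul_card` turn the quadratic form into
band sums times one iterated difference of the weights. -/
lemma tensor_ineq {q : ℝ} (hq : 0 < q) (hq2 : q < 2) {a : ℕ → ℝ} (hpos : ∀ k, 0 < a k)
    {Ω : Type} [MeasurableSpace Ω] {μ : Measure Ω} (T : (ℕ →₀ ℝ) →ₗ[ℝ] (Ω → ℝ))
    (hT : ∀ x : ℕ →₀ ℝ, (∫ ω, |T x ω| ^ q ∂μ) = ∑' k, a k * seqStar (⇑x) k ^ q)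
    (M : ℕ) (c : Fin (M + 1) → Fin 4 → ℝ) (hc : ∀ i, ∑ b, c i b = 0) :
    0 ≤ (∑ w ∈ Finset.range 3, (((w + 1 : ℕ) : ℝ) ^ q - (w : ℝ) ^ q) *
      ∏ i, autoSum (c i) w) * negDiff^[M] a 0 := by
  set C : (Fin (M + 1) → Fin 4) → ℝ := fun p => ∏ i, c i (p i) with hC
  set X : (Fin (M + 1) → Fin 4) → (Fin (M + 1) → ℝ) := fun p i => ((p i : ℕ) : ℝ) with hX
  set D : (Fin (M + 1) → Fin 4) → (Fin (M + 1) → Fin 4) → Fin (M + 1) → ℕ :=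
    fun p r i => Nat.dist (p i) (r i) with hD
  set A : ℕ → ℝ := fun n => ∑ k ∈ Finset.range n, a k with hA
  have hCsum : ∑ p, C p = 0 := by
    have h := Finset.prod_univ_sum (fun _ : Fin (M + 1) => (Finset.univ : Finset (Fin 4))) c
    rw [Fintype.piFinset_univ] at h
    rw [hC, ← h]
    exact Finset.prod_eq_zero (Finset.mem_univ 0) (hc 0)
  have habs : ∀ p r i, |(X p - X r) i| = D p r i := by
    intro p r i
    simp only [hX, hD, Pi.sub_apply, Nat.dist]
    rcases le_total (p i : ℕ) (r i : ℕ) with h | h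
    · have h' : ((p i : ℕ) : ℝ) ≤ ((r i : ℕ) : ℝ) := by exact_mod_cast h
      rw [abs_of_nonpos (by linarith), Nat.sub_eq_zero_of_le h, zero_add, Nat.cast_sub h]; ring
    · have h' : ((r i : ℕ) : ℝ) ≤ ((p i : ℕ) : ℝ) := by exact_mod_cast h
      rw [abs_of_nonneg (by linarith), Nat.sub_eq_zero_of_le h, add_zero, Nat.cast_sub h]
  have hbd : ∀ p r i, D p r i ≤ 3 := by
    intro p r i
    simp only [hD, Nat.dist]
    omega
  have hint := fun p r => integrable_of_isometry hq hpos T hT (X p - X r) (D p r) (habs p r)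
  have hneg : ∑ p, ∑ r, C p * C r * ∫ ω, |T (finEmb _ (X p - X r)) ω| ^ q ∂μ ≤ 0 := by
    have heq : ∑ p, ∑ r, C p * C r * ∫ ω, |T (finEmb _ (X p - X r)) ω| ^ q ∂μ =
        ∫ ω, ∑ p, ∑ r, C p * C r * |T (finEmb _ (X p - X r)) ω| ^ q ∂μ := by
      rw [integral_finsetSum _ fun p _ => integrable_finsetSum _ fun r _ =>
        (hint p r).const_mul _]
      refine Finset.sum_congr rfl fun p _ => ?_
      rw [integral_finsetSum _ fun r _ => (hint p r).const_mul _]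
      exact Finset.sum_congr rfl fun r _ => (integral_const_mul _ _).symm
    rw [heq]
    refine integral_nonpos fun ω => ?_
    have := negType_abs_rpow hq hq2 C (fun p => T (finEmb _ (X p)) ω) hCsum
    simpa [map_sub] using this
  have hA' : negDiff^[M + 1] A 0 = -negDiff^[M] a 0 := by
    have h : negDiff A = fun n => -a n := by
      ext n
      simp [negDiff, hA, Finset.sum_range_succ]
    rw [Function.iterate_succ_apply, ← iterate_negDiff_neg, h]
  have hmain : ∑ p, ∑ r, C p * C r * ∫ ω, |T (finEmb _ (X p - X r)) ω| ^ q ∂μ =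
      ∑ w ∈ Finset.range 3, (((w + 1 : ℕ) : ℝ) ^ q - (w : ℝ) ^ q) *
        ((∏ i, autoSum (c i) w) * negDiff^[M + 1] A 0) := by
    have hκ : ∀ i, ∑ b : Fin 4 × Fin 4, c i b.1 * c i b.2 = 0 := by
      intro i
      rw [Fintype.sum_prod_type, ← Finset.sum_mul_sum, hc i, zero_mul]
    simp only [autoSum]
    have hw : ∀ w : ℕ, ∑ p, ∑ r, C p * C r * A (Finset.univ.filter fun i => w < D p r i).card =
        (∏ i, ∑ b : Fin 4 × Fin 4, if w < Nat.dist b.1 b.2 then 0 else c i b.1 * c i b.2) *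
          negDiff^[M + 1] A 0 := by
      intro w
      rw [← sum_prod_mul_card (fun b : Fin 4 × Fin 4 => w < Nat.dist b.1 b.2) (M + 1)
        (fun i b => c i b.1 * c i b.2) hκ A,
        ← (Equiv.arrowProdEquivProdArrow (Fin (M + 1)) (fun _ => Fin 4) (fun _ => Fin 4)).symm.sum_comp,
        Fintype.sum_prod_type]
      refine Finset.sum_congr rfl fun p _ => Finset.sum_congr rfl fun r _ => ?_
      simp only [Equiv.arrowProdEquivProdArrow, hC, hD, Finset.prod_mul_distrib,
        Equiv.coe_fn_symm_mk]
      congr!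
    simp only [← hw, Finset.mul_sum]
    rw [Finset.sum_comm' (t' := Finset.univ) (s' := fun _ => Finset.range 3) (by simp)]
    refine Finset.sum_congr rfl fun p _ => ?_
    rw [Finset.sum_comm' (t' := Finset.univ) (s' := fun _ => Finset.range 3) (by simp)]
    refine Finset.sum_congr rfl fun r _ => ?_
    rw [hT, tsum_seqStar_finEmb hq a _ (D p r) 3 (habs p r) (hbd p r), Finset.mul_sum]
    refine Finset.sum_congr rfl fun w _ => ?_
    ring
  rw [hmain, hA'] at hneg
  simp only [← mul_assoc, ← Finset.sum_mul] at hneg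
  linarith

/-- For `0 < q < 2`, `tensor_ineq` for two choices of coefficients shows that all high iterated
differences of the weights at `0` are both nonnegative and nonpositive. -/
lemma const_of_lt_two {q : ℝ} (hq : 0 < q) (hq2 : q < 2) {a : ℕ → ℝ} (hpos : ∀ k, 0 < a k)
    (hanti : ∀ k, a (k + 1) ≤ a k)
    {Ω : Type} [MeasurableSpace Ω] {μ : Measure Ω} (T : (ℕ →₀ ℝ) →ₗ[ℝ] (Ω → ℝ))
    (hT : ∀ x : ℕ →₀ ℝ, (∫ ω, |T x ω| ^ q ∂μ) = ∑' k, a k * seqStar (⇑x) k ^ q) (k : ℕ) :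
    a k = a 0 := by
  have hlim : Filter.Tendsto a Filter.atTop (nhds (⨅ k, a k)) :=
    tendsto_atTop_ciInf (antitone_nat_of_succ_le hanti)
      ⟨0, by rintro _ ⟨k, rfl⟩; exact (hpos k).le⟩
  have hnonneg : ∀ M, 0 ≤ negDiff^[M] a 0 := by
    intro M
    -- the band sums of `(1, -1)` are `2, 0, 0`, so only the level `w = 0` survives
    have h := tensor_ineq hq hq2 hpos T hT M (fun _ => ![1, -1, 0, 0])
      (fun _ => by simp [Fin.sum_univ_four])
    have s0 : autoSum ![1, -1, 0, 0] 0 = 2 := by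
      simp [autoSum, Fintype.sum_prod_type, Fin.sum_univ_four, Nat.dist]
      try norm_num
    have s1 : autoSum ![1, -1, 0, 0] 1 = 0 := by
      simp [autoSum, Fintype.sum_prod_type, Fin.sum_univ_four, Nat.dist]
      try norm_num
    have s2 : autoSum ![1, -1, 0, 0] 2 = 0 := by
      simp [autoSum, Fintype.sum_prod_type, Fin.sum_univ_four, Nat.dist]
      try norm_num
    simp only [Finset.sum_range_succ, Finset.sum_range_zero, s0, s1, s2, Finset.prod_const,
      Finset.card_univ, Fintype.card_fin] at h
    simp only [Nat.cast_zero, Real.zero_rpow hq.ne', zero_add, Nat.cast_one, Real.one_rpow,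
      ne_eq, Nat.succ_ne_zero, not_false_eq_true, zero_pow, mul_zero, add_zero, sub_zero,
      one_mul] at h
    exact nonneg_of_mul_nonneg_right h (by positivity)
  have hg : (0 : ℝ) < 2 ^ q - 1 := sub_pos.2 (Real.one_lt_rpow one_lt_two hq)
  obtain ⟨M₀, hM₀⟩ : ∃ M₀ : ℕ, ∀ M, M₀ ≤ M → 6 * (4 : ℝ) ^ M < 2 * (2 ^ q - 1) * 6 ^ M := by
    have ht : Filter.Tendsto (fun M : ℕ => 6 * ((4 : ℝ) / 6) ^ M) Filter.atTop (nhds (6 * 0)) :=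
      (tendsto_pow_atTop_nhds_zero_of_lt_one (by norm_num) (by norm_num)).const_mul 6
    rw [mul_zero] at ht
    obtain ⟨M₀, h⟩ := Filter.eventually_atTop.1 (ht.eventually_lt_const (mul_pos two_pos hg))
    refine ⟨M₀, fun M hM => ?_⟩
    have h1 := h M hM
    rwa [div_pow, ← mul_div_assoc, div_lt_iff₀ (by positivity)] at h1
  have hnonpos : ∀ M, M₀ ≤ M → negDiff^[M] a 0 ≤ 0 := by
    intro M hM
    -- The band sums of `(1, -2, 1)` are `6, -2, 0` and those of `(1, 1, -1, -1)` are `4, 6, 2`.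
    -- The second vector peaks at `w = 1`, where the first one is negative, so that level dominates.
    have h := tensor_ineq hq hq2 hpos T hT M
      (Fin.cons ![1, -2, 1, 0] fun _ => ![1, 1, -1, -1])
      (fun i => by refine Fin.cases ?_ (fun j => ?_) i <;> simp [Fin.sum_univ_four] <;> norm_num)
    have s0 : autoSum ![1, -2, 1, 0] 0 = 6 := by
      simp [autoSum, Fintype.sum_prod_type, Fin.sum_univ_four, Nat.dist]
      try norm_num
    have s1 : autoSum ![1, -2, 1, 0] 1 = -2 := by
      simp [autoSum, Fintype.sum_prod_type, Fin.sum_univ_four, Nat.dist]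
      try norm_num
    have s2 : autoSum ![1, -2, 1, 0] 2 = 0 := by
      simp [autoSum, Fintype.sum_prod_type, Fin.sum_univ_four, Nat.dist]
      try norm_num
    have t0 : autoSum ![1, 1, -1, -1] 0 = 4 := by
      simp [autoSum, Fintype.sum_prod_type, Fin.sum_univ_four, Nat.dist]
      try norm_num
    have t1 : autoSum ![1, 1, -1, -1] 1 = 6 := by
      simp [autoSum, Fintype.sum_prod_type, Fin.sum_univ_four, Nat.dist]
      try norm_num
    simp only [Finset.sum_range_succ, Finset.sum_range_zero, Fin.prod_univ_succ, Fin.cons_zero,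
      Fin.cons_succ, s0, s1, s2, t0, t1, Finset.prod_const,
      Finset.card_univ, Fintype.card_fin] at h
    simp only [Nat.cast_zero, Real.zero_rpow hq.ne', zero_add, Nat.cast_one, Real.one_rpow,
      zero_mul, mul_zero, add_zero, sub_zero, one_mul, Nat.reduceAdd, Nat.cast_ofNat] at h
    by_contra hc
    have := hM₀ M hM
    have h2 := nonneg_of_mul_nonneg_left h (not_le.1 hc)
    nlinarith
  exact const_of_iterate_negDiff hlim M₀ (fun k => iterate_negDiff_eq_zero_of_tail
    (fun n hn => le_antisymm (hnonpos n hn) (hnonneg n)) k (M₀ + 1) (Nat.le_succ _)) k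

/-- For `0 < q < ∞` and a non-increasing sequence of positive weights `a` with
`∑ a_k = ∞`, the space `c₀₀` of finitely supported sequences with the Lorentz
`q`-norm `‖x‖ = (∑ a_k (x_k^*)^q)^{1/q}` embeds isometrically into `L_q`
iff the weight sequence is constant. -/
theorem stmt4 (q : ℝ) (hq : 0 < q) (a : ℕ → ℝ)
    (hpos : ∀ k, 0 < a k) (hanti : ∀ k, a (k + 1) ≤ a k)
    (hdiv : ¬ Summable a) :
    (∃ (Ω : Type) (_ : MeasurableSpace Ω) (μ : Measure Ω)
        (T : (ℕ →₀ ℝ) →ₗ[ℝ] (Ω → ℝ)),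
      ∀ x : ℕ →₀ ℝ,
        (∫ ω, |T x ω| ^ q ∂μ) = ∑' k, a k * seqStar (⇑x) k ^ q) ↔
    (∀ k, a k = a 0) := by
  constructor
  · rintro ⟨Ω, _, μ, T, hT⟩ k
    rcases lt_or_ge q 2 with hq2 | hq2
    · exact const_of_lt_two hq hq2 hpos hanti T hT k
    · exact le_antisymm (antitone_nat_of_succ_le hanti (Nat.zero_le k))
        (const_of_two_le hq2 hpos T hT k)
  · intro hconst
    -- constant weights give a multiple of the `ℓ_q` norm, realized on weighted counting measure
    refine ⟨ℕ, ⊤, ENNReal.ofReal (a 0) • Measure.count, Finsupp.lcoeFun, fun x => ?_⟩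
    have hsum : Summable fun i => |x i| ^ q := by
      refine summable_of_ne_finset_zero (s := x.support) fun i hi => ?_
      rw [Finsupp.notMem_support_iff.1 hi, abs_zero, Real.zero_rpow hq.ne']
    let _ : MeasurableSpace ℕ := ⊤
    have hint : Integrable (fun i => |x i| ^ q) (Measure.count : Measure ℕ) := by
      rw [integrable_count_iff]
      exact hsum.norm
    simp only [hconst, tsum_mul_left, tsum_seqStar_rpow hq, Finsupp.lcoeFun_apply]
    rw [integral_smul_measure, ENNReal.toReal_ofReal (hpos 0).le, smul_eq_mul,
      integral_countable hint]
    simp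
end

section
/- Let n ≥ 2, q ∈ (0,2], and let a_1, …, a_n be nonnegative real numbers. The function x ↦ exp(−(a_1 (x_1^*)^q + … + a_n (x_n^*)^q)) is positive definite on ℝ^n if and only if either (i) 1 < q ≤ 2 and a_1 = a_2 = … = a_n, or (ii) 0 < q ≤ 1 and the numbers a_1, …, a_n form a non-increasing arithmetic progression, i.e., there is d ≥ 0 with a_k − a_{k+1} = d for all 1 ≤ k ≤ n−1. -/
/-!
Write `N(x) = ∑ a_k (x_k^*) ^ q`. As `N` is homogeneous of degree `q`, positive definiteness of
`exp (-N)` is the same as that of `exp (-t N)` for all `t ≥ 0`, hence (Schoenberg) the same as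
`N` being of negative type: `∑ c_i c_j N(y_i - y_j) ≤ 0` whenever `∑ c_i = 0`.

Sufficiency. `|x| ^ q` is of negative type for `q ≤ 2`, since powers with exponent in `(0, 1]`
preserve negative type (`NegTypeKernel.rpow`). For equal weights `N` is a multiple of
`∑ |x_i| ^ q`. If `a_k = s + (n - k) d`, then
`N(x) = s ∑ |x_i| ^ q + d ∑_{i < j} max (|x_i|, |x_j|) ^ q` (`wsum_of_arith`), and
`max (|x|, |y|) = (|x + y| + |x - y|) / 2` is of negative type, hence so is its power with
exponent `q ≤ 1`.

Necessity. If `N` is of negative type on `ℝ^(n+1)`, then `y ↦ N(z, y) - N(0, y)` is positive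
definite on `ℝ^n` (`NegTypeWsum.increment`). For `z` large, this increment is a constant minus
the weighted sum with weights `a_k - a_(k+1)`, so the sequence of differences again gives a
function of negative type, in one dimension less (`NegTypeWsum.diff`). By induction on the
dimension everything reduces to two facts.

* In dimension `2`: `a_1 ≥ a_2`, with equality if `q > 1`. Up to constants the increment is
  `(a_1 - a_2) (L ^ q - |x| ^ q)₊`, and testing it on `δ_0 - δ_1 + δ_L - δ_(L+1)` gives
  `L ^ q - (L - 1) ^ q ≤ 2` if `a_1 > a_2`, which is false for large `L`.
* In dimension `3`: `a_1 - a_2 = a_2 - a_3`. The inequality `≥` follows from dimension `2` applied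
  to the differences. Otherwise the increment contains a positive multiple of
  `(L ^ q - max (|x|, |y|) ^ q)₊`, all the other terms depending on one variable only. Testing on
  the product of `δ_0 - δ_1 + δ_L - δ_(L+1)` with the difference of two distant blocks of `L`
  unit masses gives `L (L ^ q - (L - 1) ^ q) ≤ 2` (`NegTypeWsum.three_bound`), which is false for
  large `L` as the left side is at least `q L ^ q`.
-/

open MeasureTheory

/-- The non-increasing rearrangement of `(|x 0|, …, |x (n-1)|)`. -/
noncomputable def dstar {n : ℕ} (x : Fin n → ℝ) : Fin n → ℝ :=
  fun i => |x (Tuple.sort (fun j => -|x j|) i)|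

/-- `f : ℝⁿ → ℂ` is positive definite: for all points `y¹,…,yᵐ` and scalars
`c₁,…,c_m ∈ ℂ`, the sum `∑ cᵢ conj(cⱼ) f(yⁱ − yʲ)` is real and nonnegative. -/
def IsPosDefFn {n : ℕ} (f : (Fin n → ℝ) → ℂ) : Prop :=
  ∀ (m : ℕ) (y : Fin m → Fin n → ℝ) (c : Fin m → ℂ),
    0 ≤ (∑ i, ∑ j, c i * (starRingEnd ℂ) (c j) * f (y i - y j)).re ∧
      (∑ i, ∑ j, c i * (starRingEnd ℂ) (c j) * f (y i - y j)).im = 0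

/-! ### Positive semidefinite kernels and kernels of negative type -/

/-- The kernel `K` on a finite set is positive semidefinite (real symmetric version). -/
def PSDKernel {ι : Type} [Fintype ι] (K : ι → ι → ℝ) : Prop :=
  (∀ i j, K i j = K j i) ∧ ∀ c : ι → ℝ, 0 ≤ ∑ i, ∑ j, c i * c j * K i j

/-- The kernel `K` on a finite set is of negative type: it is symmetric, nonnegative, and its
quadratic form is nonpositive on coefficient vectors of sum zero. -/
def NegTypeKernel {ι : Type} [Fintype ι] (K : ι → ι → ℝ) : Prop :=
  (∀ i j, K i j = K j i) ∧ (∀ i j, 0 ≤ K i j) ∧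
    ∀ c : ι → ℝ, ∑ i, c i = 0 → ∑ i, ∑ j, c i * c j * K i j ≤ 0

section Kernels

variable {ι : Type} [Fintype ι]

lemma psdKernel_iff_posSemidef (K : ι → ι → ℝ) :
    PSDKernel K ↔ (Matrix.of K).PosSemidef := by
  rw [Matrix.posSemidef_iff_dotProduct_mulVec, PSDKernel]
  refine and_congr ?_ (forall_congr' fun c => ?_)
  · rw [Matrix.IsHermitian.ext_iff]
    simp only [Matrix.of_apply, star_trivial]
    exact ⟨fun h i j => h j i, fun h i j => h j i⟩
  · simp only [dotProduct, Matrix.mulVec, Matrix.of_apply, star_trivial, Finset.mul_sum]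
    have : ∀ i j, c i * c j * K i j = c i * (K i j * c j) := fun i j => by ring
    simp only [this]

lemma PSDKernel.mul {K L : ι → ι → ℝ} (hK : PSDKernel K) (hL : PSDKernel L) :
    PSDKernel (fun i j => K i j * L i j) := by
  rw [psdKernel_iff_posSemidef] at *
  exact hK.hadamard hL

lemma psdKernel_rankOne (u : ι → ℝ) : PSDKernel (fun i j => u i * u j) := by
  refine ⟨fun i j => mul_comm _ _, fun c => ?_⟩
  have : ∑ i, ∑ j, c i * c j * (u i * u j) = (∑ i, c i * u i) ^ 2 := by
    rw [sq, Finset.sum_mul_sum]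
    exact Finset.sum_congr rfl fun i _ => Finset.sum_congr rfl fun j _ => by ring
  rw [this]; positivity

lemma PSDKernel.pow {K : ι → ι → ℝ} (hK : PSDKernel K) (k : ℕ) :
    PSDKernel (fun i j => K i j ^ k) := by
  induction k with
  | zero => simpa using psdKernel_rankOne (fun _ : ι => (1 : ℝ))
  | succ k ih => simpa only [pow_succ] using ih.mul hK

/-- The exponential series is a positive combination of Hadamard powers. -/
lemma PSDKernel.exp {K : ι → ι → ℝ} (hK : PSDKernel K) :
    PSDKernel (fun i j => Real.exp (K i j)) := by
  refine ⟨fun i j => by simp only [hK.1 i j], fun c => ?_⟩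
  have h : HasSum (fun k : ℕ => ∑ i, ∑ j, c i * c j * (K i j ^ k / (k.factorial : ℝ)))
      (∑ i, ∑ j, c i * c j * Real.exp (K i j)) := by
    refine hasSum_sum fun i _ => hasSum_sum fun j _ => HasSum.mul_left _ ?_
    rw [Real.exp_eq_exp_ℝ]
    exact NormedSpace.expSeries_div_hasSum_exp (K i j)
  refine h.nonneg fun k => ?_
  have := (hK.pow k).2 c
  have h2 : ∑ i, ∑ j, c i * c j * (K i j ^ k / (k.factorial : ℝ)) =
      (∑ i, ∑ j, c i * c j * K i j ^ k) / (k.factorial : ℝ) := by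
    simp only [Finset.sum_div, mul_div_assoc]
  rw [h2]; positivity

/-- Centering a negative type kernel at a base point `o` gives a positive semidefinite one. -/
lemma NegTypeKernel.centered {K : ι → ι → ℝ} (hK : NegTypeKernel K) (o : ι) :
    PSDKernel (fun i j => K i o + K o j - K i j - K o o) := by
  classical
  refine ⟨fun i j => by simp only []; rw [hK.1 i o, hK.1 o j, hK.1 i j]; ring, fun c => ?_⟩
  set s := ∑ i, c i with hs
  have h0 : ∑ i, (c i - s * (if i = o then 1 else 0)) = 0 := by
    simp [Finset.sum_sub_distrib, ← hs]
  have h := hK.2.2 _ h0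
  have e1 : ∑ i, ∑ j, (c i - s * (if i = o then 1 else 0)) *
      (c j - s * (if j = o then 1 else 0)) * K i j =
      ∑ i, ∑ j, c i * c j * K i j - s * ∑ i, c i * K i o - s * ∑ j, c j * K o j
        + s * s * K o o := by
    have : ∀ i j, (c i - s * (if i = o then 1 else 0)) *
        (c j - s * (if j = o then 1 else 0)) * K i j =
        c i * c j * K i j - (if j = o then s * (c i * K i j) else 0)
          - (if i = o then s * (c j * K i j) else 0)
          + (if i = o then (if j = o then s * s * K i j else 0) else 0) := by
      intro i j; split_ifs <;> ring
    simp only [this, Finset.sum_add_distrib, Finset.sum_sub_distrib, Finset.sum_ite_eq',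
      Finset.mem_univ, if_true, Finset.mul_sum]
    congr 1
    · congr 1
      rw [Finset.sum_comm]; simp
    · rw [Finset.sum_comm]; simp
  have e2 : ∑ i, ∑ j, c i * c j * (K i o + K o j - K i j - K o o) =
      s * ∑ i, c i * K i o + s * ∑ j, c j * K o j - ∑ i, ∑ j, c i * c j * K i j
        - s * s * K o o := by
    have : ∀ i j, c i * c j * (K i o + K o j - K i j - K o o) =
      (c i * K i o) * c j + c i * (c j * K o j) - c i * c j * K i j - c i * c j * K o o := by
      intro i j; ring
    simp only [this, Finset.sum_add_distrib, Finset.sum_sub_distrib, ← Finset.sum_mul,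
      ← Finset.mul_sum, ← hs]
    ring
  rw [e1] at h
  rw [e2]
  linarith

/-- One half of Schoenberg's theorem. -/
lemma NegTypeKernel.exp_neg {K : ι → ι → ℝ} (hK : NegTypeKernel K) :
    PSDKernel (fun i j => Real.exp (-K i j)) := by
  rcases isEmpty_or_nonempty ι with h | ⟨⟨o⟩⟩
  · exact ⟨fun i => h.elim i, fun c => by simp⟩
  have h := (psdKernel_rankOne (fun i => Real.exp (-K i o + K o o / 2))).mul
    (hK.centered o).exp
  convert h using 3 with i j
  rw [← Real.exp_add, ← Real.exp_add, hK.1 o j]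
  congr 1; ring

lemma NegTypeKernel.const_mul {K : ι → ι → ℝ} (hK : NegTypeKernel K) {s : ℝ} (hs : 0 ≤ s) :
    NegTypeKernel (fun i j => s * K i j) := by
  refine ⟨fun i j => by simp only [hK.1 i j], fun i j => mul_nonneg hs (hK.2.1 i j), fun c hc => ?_⟩
  have : ∑ i, ∑ j, c i * c j * (s * K i j) = s * ∑ i, ∑ j, c i * c j * K i j := by
    simp only [Finset.mul_sum]
    exact Finset.sum_congr rfl fun i _ => Finset.sum_congr rfl fun j _ => by ring
  rw [this]
  exact mul_nonpos_of_nonneg_of_nonpos hs (hK.2.2 c hc)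

lemma NegTypeKernel.sum {κ : Type} (s : Finset κ) {K : κ → ι → ι → ℝ}
    (hK : ∀ k ∈ s, NegTypeKernel (K k)) :
    NegTypeKernel (fun i j => ∑ k ∈ s, K k i j) := by
  refine ⟨fun i j => Finset.sum_congr rfl fun k hk => (hK k hk).1 i j,
    fun i j => Finset.sum_nonneg fun k hk => (hK k hk).2.1 i j, fun c hc => ?_⟩
  have : ∑ i, ∑ j, c i * c j * (∑ k ∈ s, K k i j) =
      ∑ k ∈ s, ∑ i, ∑ j, c i * c j * K k i j := by
    simp only [Finset.mul_sum]
    rw [Finset.sum_comm (s := s)]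
    exact Finset.sum_congr rfl fun i _ => Finset.sum_comm
  rw [this]
  exact Finset.sum_nonpos fun k hk => (hK k hk).2.2 c hc

lemma NegTypeKernel.add {K L : ι → ι → ℝ} (hK : NegTypeKernel K) (hL : NegTypeKernel L) :
    NegTypeKernel (fun i j => K i j + L i j) := by
  refine ⟨fun i j => by simp only [hK.1 i j, hL.1 i j], fun i j => add_nonneg (hK.2.1 i j) (hL.2.1 i j),
    fun c hc => ?_⟩
  simp only [mul_add, Finset.sum_add_distrib]
  exact add_nonpos (hK.2.2 c hc) (hL.2.2 c hc)

/-- The resolvent `1 / (t + K)` is the Laplace transform of the kernels `exp (-s K)`. -/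
lemma NegTypeKernel.inv_add {K : ι → ι → ℝ} (hK : NegTypeKernel K) {t : ℝ} (ht : 0 < t) :
    PSDKernel (fun i j => (t + K i j)⁻¹) := by
  refine ⟨fun i j => by simp only [hK.1 i j], fun c => ?_⟩
  have hpos : ∀ i j, 0 < t + K i j := fun i j => by have := hK.2.1 i j; linarith
  have hint : ∀ i j, IntegrableOn (fun s : ℝ => Real.exp (-(t + K i j) * s)) (Set.Ioi 0) :=
    fun i j => integrableOn_exp_mul_Ioi (by have := hpos i j; linarith) 0
  have hval : ∀ i j, (t + K i j)⁻¹ = ∫ s in Set.Ioi (0 : ℝ), Real.exp (-(t + K i j) * s) := by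
    intro i j
    rw [integral_exp_mul_Ioi (by have := hpos i j; linarith) 0]
    have := (hpos i j).ne'
    rw [mul_zero, Real.exp_zero, neg_div_neg_eq, one_div]
  have : ∑ i, ∑ j, c i * c j * (t + K i j)⁻¹ =
      ∫ s in Set.Ioi (0 : ℝ), ∑ i, ∑ j, c i * c j * Real.exp (-(t + K i j) * s) := by
    rw [integral_finsetSum _ fun i _ => integrable_finsetSum _ fun j _ => (hint i j).const_mul _]
    refine Finset.sum_congr rfl fun i _ => ?_
    rw [integral_finsetSum _ fun j _ => (hint i j).const_mul _]
    refine Finset.sum_congr rfl fun j _ => ?_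
    rw [integral_const_mul, hval]
  rw [this]
  refine setIntegral_nonneg measurableSet_Ioi fun s hs => ?_
  have h := ((hK.const_mul (le_of_lt hs : (0 : ℝ) ≤ s)).exp_neg).2 c
  have e : ∑ i, ∑ j, c i * c j * Real.exp (-(t + K i j) * s) =
      Real.exp (-t * s) * ∑ i, ∑ j, c i * c j * Real.exp (-(s * K i j)) := by
    simp only [Finset.mul_sum]
    refine Finset.sum_congr rfl fun i _ => Finset.sum_congr rfl fun j _ => ?_
    rw [mul_left_comm, ← Real.exp_add]
    congr 2; ring
  rw [e]; positivity

/-- Powers with exponent in `(0, 1]` preserve negative type, as `x ^ p` is a positive mixture of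
the functions `1 / t - 1 / (t + x)`. -/
lemma NegTypeKernel.rpow {K : ι → ι → ℝ} (hK : NegTypeKernel K) {p : ℝ} (hp0 : 0 < p)
    (hp1 : p ≤ 1) : NegTypeKernel (fun i j => K i j ^ p) := by
  rcases hp1.eq_or_lt with rfl | hp1
  · simpa using hK
  have hp : p ∈ Set.Ioo (0 : ℝ) 1 := ⟨hp0, hp1⟩
  refine ⟨fun i j => by simp only [hK.1 i j], fun i j => Real.rpow_nonneg (hK.2.1 i j) _, fun c hc => ?_⟩
  have hint : ∀ i j, IntegrableOn (fun t : ℝ => Real.rpowIntegrand₀₁ p t (K i j)) (Set.Ioi 0) :=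
    fun i j => Real.integrableOn_rpowIntegrand₀₁_Ioi hp (hK.2.1 i j)
  set C := ∫ t in Set.Ioi (0 : ℝ), Real.rpowIntegrand₀₁ p t 1 with hC
  have hCpos : 0 < C := Real.integral_rpowIntegrand₀₁_one_pos hp
  have : ∑ i, ∑ j, c i * c j * K i j ^ p = C⁻¹ *
      ∫ t in Set.Ioi (0 : ℝ), ∑ i, ∑ j, c i * c j * Real.rpowIntegrand₀₁ p t (K i j) := by
    rw [integral_finsetSum _ fun i _ => integrable_finsetSum _ fun j _ => (hint i j).const_mul _,
      Finset.mul_sum]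
    refine Finset.sum_congr rfl fun i _ => ?_
    rw [integral_finsetSum _ fun j _ => (hint i j).const_mul _, Finset.mul_sum]
    refine Finset.sum_congr rfl fun j _ => ?_
    rw [integral_const_mul, Real.rpow_eq_const_mul_integral hp (hK.2.1 i j)]
    ring
  rw [this]
  refine mul_nonpos_of_nonneg_of_nonpos (by positivity) ?_
  refine setIntegral_nonpos measurableSet_Ioi fun t ht => ?_
  have ht : (0 : ℝ) < t := ht
  have h := (hK.inv_add ht).2 c
  have e : ∑ i, ∑ j, c i * c j * Real.rpowIntegrand₀₁ p t (K i j) =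
      t ^ p * (t⁻¹ * ((∑ i, c i) * ∑ j, c j) - ∑ i, ∑ j, c i * c j * (t + K i j)⁻¹) := by
    simp only [Real.rpowIntegrand₀₁]
    rw [Finset.sum_mul_sum]
    simp only [Finset.mul_sum, ← Finset.sum_sub_distrib]
    exact Finset.sum_congr rfl fun i _ => Finset.sum_congr rfl fun j _ => by ring
  rw [e, hc]
  have : 0 ≤ t ^ p := by positivity
  nlinarith

lemma negTypeKernel_sq (u : ι → ℝ) : NegTypeKernel (fun i j => (u i - u j) ^ 2) := by
  refine ⟨fun i j => by ring, fun i j => by positivity, fun c hc => ?_⟩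
  have : ∑ i, ∑ j, c i * c j * (u i - u j) ^ 2 =
      (∑ i, c i * u i ^ 2) * (∑ j, c j) + (∑ i, c i) * (∑ j, c j * u j ^ 2)
        - 2 * ((∑ i, c i * u i) * (∑ j, c j * u j)) := by
    simp only [Finset.sum_mul_sum]
    simp only [Finset.mul_sum, ← Finset.sum_sub_distrib, ← Finset.sum_add_distrib]
    exact Finset.sum_congr rfl fun i _ => Finset.sum_congr rfl fun j _ => by ring
  rw [this, hc]
  nlinarith [sq_nonneg (∑ i, c i * u i)]

lemma negTypeKernel_abs_rpow (u : ι → ℝ) {q : ℝ} (hq0 : 0 < q) (hq2 : q ≤ 2) :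
    NegTypeKernel (fun i j => |u i - u j| ^ q) := by
  have h := (negTypeKernel_sq u).rpow (p := q / 2) (by linarith) (by linarith)
  convert h using 3 with i j
  rw [← sq_abs, ← Real.rpow_natCast, ← Real.rpow_mul (abs_nonneg _)]
  congr 1; push_cast; ring

/-- In the plane `max (|x|, |y|) = (|x + y| + |x - y|) / 2`, which is of negative type. -/
lemma negTypeKernel_max_rpow (u v : ι → ℝ) {q : ℝ} (hq0 : 0 < q) (hq1 : q ≤ 1) :
    NegTypeKernel (fun i j => (max |u i - u j| |v i - v j|) ^ q) := by
  have h1 := negTypeKernel_abs_rpow (fun i => u i + v i) zero_lt_one one_le_two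
  have h2 := negTypeKernel_abs_rpow (fun i => u i - v i) zero_lt_one one_le_two
  have h := (((h1.add h2).const_mul (s := 1 / 2) (by norm_num)).rpow hq0 hq1)
  convert h using 3 with i j
  simp only [Real.rpow_one]
  rw [show u i + v i - (u j + v j) = (u i - u j) + (v i - v j) by ring,
    show u i - v i - (u j - v j) = (u i - u j) - (v i - v j) by ring]
  generalize u i - u j = x
  generalize v i - v j = y
  congr 1
  clear h h1 h2
  rcases abs_cases x with hx | hx <;> rcases abs_cases y with hy | hy <;>
    rcases abs_cases (x + y) with h1 | h1 <;> rcases abs_cases (x - y) with h2 | h2 <;>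
    rcases max_cases |x| |y| with h3 | h3 <;> linarith

end Kernels

/-! ### Decreasing rearrangements and weighted sums -/

section Rearrangement

variable {n : ℕ}

lemma dstar_antitone (x : Fin n → ℝ) : Antitone (dstar x) := by
  intro i j hij
  have := Tuple.monotone_sort (fun j => -|x j|) hij
  simpa [dstar] using this

lemma exists_perm_dstar (x : Fin n → ℝ) :
    ∃ σ : Equiv.Perm (Fin n), ∀ i, dstar x i = |x (σ i)| :=
  ⟨_, fun _ => rfl⟩

lemma dstar_nonneg (x : Fin n → ℝ) (i : Fin n) : 0 ≤ dstar x i := abs_nonneg _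

/-- A non-increasing tuple that is a permutation of `|x|` is the rearrangement of `x`. -/
lemma dstar_eq_of_perm {x y : Fin n → ℝ} (hy : Antitone y) (σ : Fin n → Fin n)
    (hσ : Function.Injective σ) (h : ∀ i, y i = |x (σ i)|) : dstar x = y := by
  have e : ((fun j => |x j|) ∘ (Equiv.ofBijective σ (Finite.injective_iff_bijective.1 hσ))) = y := by
    funext i; simp [h]
  have := Tuple.unique_antitone (f := fun j => |x j|)
    (σ := Equiv.ofBijective σ (Finite.injective_iff_bijective.1 hσ))
    (τ := Tuple.sort (fun j => -|x j|)) (by rw [e]; exact hy) (dstar_antitone x)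
  rw [← e, this]
  rfl

lemma dstar_congr_abs {x y : Fin n → ℝ} (h : ∀ i, |x i| = |y i|) : dstar x = dstar y := by
  obtain ⟨σ, hσ⟩ := exists_perm_dstar y
  exact dstar_eq_of_perm (dstar_antitone y) σ σ.injective fun i => by rw [hσ, h]

lemma dstar_smul (x : Fin n → ℝ) {t : ℝ} (ht : 0 ≤ t) : dstar (t • x) = t • dstar x := by
  obtain ⟨σ, hσ⟩ := exists_perm_dstar x
  refine dstar_eq_of_perm ((dstar_antitone x).const_mul ht) σ σ.injective fun i => ?_
  simp [hσ, abs_mul, abs_of_nonneg ht]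

lemma dstar_cons_of_le (x : Fin n → ℝ) {z : ℝ} (hz : ∀ i, |x i| ≤ z) (hz0 : 0 ≤ z) :
    dstar (Fin.cons z x : Fin (n + 1) → ℝ) = Fin.cons z (dstar x) := by
  obtain ⟨σ, hσ⟩ := exists_perm_dstar x
  refine dstar_eq_of_perm ?_ (Fin.cons 0 fun i => (σ i).succ) ?_ ?_
  · intro i j hij
    induction j using Fin.cases with
    | zero => rw [Fin.le_zero_iff.1 hij]
    | succ j =>
      induction i using Fin.cases with
      | zero => simpa [hσ] using hz _
      | succ i => simpa using dstar_antitone x (Fin.succ_le_succ_iff.1 hij)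
  · intro i j
    induction i using Fin.cases <;> induction j using Fin.cases <;>
      simp [Fin.succ_ne_zero, (Fin.succ_ne_zero _).symm]
  · intro i
    induction i using Fin.cases <;> simp [hσ, abs_of_nonneg hz0]

lemma dstar_cons_zero (x : Fin n → ℝ) :
    dstar (Fin.cons 0 x : Fin (n + 1) → ℝ) = Fin.snoc (dstar x) 0 := by
  obtain ⟨σ, hσ⟩ := exists_perm_dstar x
  refine dstar_eq_of_perm ?_ (Fin.snoc (α := fun _ => Fin (n + 1)) (fun i => (σ i).succ) 0) ?_ ?_
  · intro i j hij
    induction i using Fin.lastCases with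
    | last => rw [Fin.last_le_iff.1 hij]
    | cast i =>
      induction j using Fin.lastCases with
      | last => simpa using dstar_nonneg x i
      | cast j => simpa using dstar_antitone x (Fin.castSucc_le_castSucc_iff.1 hij)
  · intro i j
    induction i using Fin.lastCases <;> induction j using Fin.lastCases <;>
      simp [Fin.succ_ne_zero, (Fin.succ_ne_zero _).symm]
  · intro i
    induction i using Fin.lastCases <;> simp [hσ]

lemma dstar_head_eq {x : Fin (n + 1) → ℝ} {M : ℝ} (h : ∀ i, |x i| ≤ M) (i : Fin (n + 1))
    (hi : |x i| = M) : dstar x 0 = M := by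
  obtain ⟨σ, hσ⟩ := exists_perm_dstar x
  refine le_antisymm (by rw [hσ]; exact h _) ?_
  have h1 := dstar_antitone x (Fin.zero_le (σ.symm i))
  rw [hσ (σ.symm i), Equiv.apply_symm_apply, hi] at h1
  exact h1

lemma sum_dstar (x : Fin n → ℝ) (f : ℝ → ℝ) : ∑ i, f (dstar x i) = ∑ i, f |x i| := by
  obtain ⟨σ, hσ⟩ := exists_perm_dstar x
  simp only [hσ]
  exact Equiv.sum_comp σ fun i => f |x i|

lemma sum_sum_dstar (x : Fin n → ℝ) (f : ℝ → ℝ → ℝ) :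
    ∑ i, ∑ j, f (dstar x i) (dstar x j) = ∑ i, ∑ j, f |x i| |x j| := by
  obtain ⟨σ, hσ⟩ := exists_perm_dstar x
  simp only [hσ]
  rw [Equiv.sum_comp σ fun i => ∑ j, f |x i| |x (σ j)|]
  exact Finset.sum_congr rfl fun i _ => Equiv.sum_comp σ fun j => f |x i| |x j|

/-- In a non-increasing tuple of length `n`, the entry with index `i` (counted from `0`) is the
maximum of exactly `2 (n - 1 - i) + 1` ordered pairs of entries. -/
lemma sum_sum_max_of_antitone : ∀ {n : ℕ} {s : Fin n → ℝ}, Antitone s →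
    ∑ i, ∑ j, max (s i) (s j) = ∑ i : Fin n, (2 * ((n : ℝ) - 1 - (i : ℝ)) + 1) * s i
  | 0, _, _ => by simp
  | n + 1, s, hs => by
    have ih := sum_sum_max_of_antitone (s := fun i => s i.succ)
      (fun i j hij => hs (Fin.succ_le_succ_iff.2 hij))
    have h0 : ∀ j : Fin n, s j.succ ≤ s 0 := fun j => hs (Fin.zero_le _)
    simp only [Fin.sum_univ_succ, Finset.sum_add_distrib, max_self, max_eq_left (h0 _),
      max_eq_right (h0 _), ih, Finset.sum_const, Finset.card_univ, Fintype.card_fin, nsmul_eq_mul]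
    have : ∀ i : Fin n, (2 * (((n + 1 : ℕ) : ℝ) - 1 - ((i.succ : Fin (n + 1)) : ℝ)) + 1) * s i.succ
        = (2 * ((n : ℝ) - 1 - (i : ℝ)) + 1) * s i.succ := by
      intro i; simp only [Fin.val_succ]; push_cast; ring
    simp only [this]
    simp
    ring

/-- The weighted sum `∑ a_k (x_k^*) ^ q` (the weights are numbered from `1`). -/
noncomputable def wsum (a : ℕ → ℝ) (q : ℝ) (x : Fin n → ℝ) : ℝ :=
  ∑ i : Fin n, a (i.1 + 1) * dstar x i ^ q

lemma wsum_congr_abs (a : ℕ → ℝ) (q : ℝ) {x y : Fin n → ℝ} (h : ∀ i, |x i| = |y i|) :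
    wsum a q x = wsum a q y := by
  rw [wsum, wsum, dstar_congr_abs h]

lemma wsum_neg (a : ℕ → ℝ) (q : ℝ) (x : Fin n → ℝ) : wsum a q (-x) = wsum a q x :=
  wsum_congr_abs a q fun i => by simp

lemma wsum_smul (a : ℕ → ℝ) (q : ℝ) (x : Fin n → ℝ) {t : ℝ} (ht : 0 ≤ t) :
    wsum a q (t • x) = t ^ q * wsum a q x := by
  rw [wsum, wsum, dstar_smul x ht, Finset.mul_sum]
  refine Finset.sum_congr rfl fun i _ => ?_
  rw [Pi.smul_apply, smul_eq_mul, Real.mul_rpow ht (dstar_nonneg x i)]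
  ring

lemma wsum_cons_zero (a : ℕ → ℝ) {q : ℝ} (hq : 0 < q) (x : Fin n → ℝ) :
    wsum a q (Fin.cons 0 x : Fin (n + 1) → ℝ) = wsum a q x := by
  rw [wsum, dstar_cons_zero, Fin.sum_univ_castSucc]
  simp [Real.zero_rpow hq.ne', wsum]

lemma wsum_cons_of_le (a : ℕ → ℝ) (q : ℝ) (x : Fin n → ℝ) {z : ℝ} (hz : ∀ i, |x i| ≤ z)
    (hz0 : 0 ≤ z) :
    wsum a q (Fin.cons z x : Fin (n + 1) → ℝ) = a 1 * z ^ q + wsum (fun k => a (k + 1)) q x := by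
  rw [wsum, dstar_cons_of_le x hz hz0, Fin.sum_univ_succ]
  simp [wsum]

lemma wsum_two (a : ℕ → ℝ) (q : ℝ) (x y : ℝ) :
    wsum a q ![x, y] = a 2 * (|x| ^ q + |y| ^ q) + (a 1 - a 2) * (max |x| |y|) ^ q := by
  have h1 := sum_dstar ![x, y] (fun t => t ^ q)
  have h2 : dstar ![x, y] 0 = max |x| |y| := by
    rcases le_total |x| |y| with h | h
    · exact dstar_head_eq (by intro i; fin_cases i <;> simp) 1 (by simp [h])
    · exact dstar_head_eq (by intro i; fin_cases i <;> simp) 0 (by simp [h])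
  simp only [Fin.sum_univ_two, h2, Matrix.cons_val_zero, Matrix.cons_val_one] at h1
  simp only [wsum, Fin.sum_univ_two, h2, Fin.val_zero, Fin.val_one, zero_add]
  have : dstar ![x, y] 1 ^ q = |x| ^ q + |y| ^ q - max |x| |y| ^ q := by linarith
  rw [this]; norm_num; ring

lemma wsum_three (a : ℕ → ℝ) {q : ℝ} (hq : 0 < q) (x y z : ℝ) :
    wsum a q ![x, y, z] = a 3 * (|x| ^ q + |y| ^ q + |z| ^ q)
      + (a 2 - a 3) * (max (|x| ^ q) (|y| ^ q) + max (|x| ^ q) (|z| ^ q) + max (|y| ^ q) (|z| ^ q))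
      + (a 1 - 2 * a 2 + a 3) * (max |x| (max |y| |z|)) ^ q := by
  have h1 := sum_dstar ![x, y, z] (fun t => t ^ q)
  have h3 := sum_sum_dstar ![x, y, z] (fun t u => max (t ^ q) (u ^ q))
  have h2 : dstar ![x, y, z] 0 = max |x| (max |y| |z|) := by
    have hle : ∀ i, |(![x, y, z] : Fin 3 → ℝ) i| ≤ max |x| (max |y| |z|) := by
      intro i; fin_cases i <;> simp
    rcases max_choice |x| (max |y| |z|) with h | h
    · exact dstar_head_eq hle 0 (by simpa using h.symm)
    · rcases max_choice |y| |z| with h' | h'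
      · exact dstar_head_eq hle 1 (by rw [h, h']; simp)
      · exact dstar_head_eq hle 2 (by rw [h, h']; simp)
  have hanti : Antitone fun i => dstar ![x, y, z] i ^ q := fun i j hij =>
    Real.rpow_le_rpow (dstar_nonneg _ _) (dstar_antitone _ hij) hq.le
  have h4 := sum_sum_max_of_antitone hanti
  rw [h3] at h4
  simp only [Fin.sum_univ_three, h2, Matrix.cons_val_zero, Matrix.cons_val_one, Matrix.cons_val,
    max_self] at h1 h4
  rw [max_comm (|y| ^ q) (|x| ^ q), max_comm (|z| ^ q) (|x| ^ q), max_comm (|z| ^ q) (|y| ^ q)] at h4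
  simp only [wsum, Fin.sum_univ_three, h2]
  norm_num at h4 ⊢
  generalize dstar ![x, y, z] 1 ^ q = s1 at *
  generalize dstar ![x, y, z] 2 ^ q = s2 at *
  generalize (max |x| (max |y| |z|)) ^ q = s0 at *
  have e2 : s2 = |x| ^ q + |y| ^ q + |z| ^ q - s0 - s1 := by linarith
  have e1 : s1 = max (|x| ^ q) (|y| ^ q) + max (|x| ^ q) (|z| ^ q) + max (|y| ^ q) (|z| ^ q)
    - 2 * s0 := by linarith
  rw [e2, e1]; ring

end Rearrangement

/-! ### Necessity -/

/-- The function `wsum a q` on `ℝⁿ` is conditionally negative definite. -/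
def NegTypeWsum (a : ℕ → ℝ) (q : ℝ) (n : ℕ) : Prop :=
  ∀ (ι : Type) [Fintype ι] (y : ι → Fin n → ℝ) (c : ι → ℝ), ∑ i, c i = 0 →
    ∑ i, ∑ j, c i * c j * wsum a q (y i - y j) ≤ 0

section Necessity

variable {n : ℕ} {a : ℕ → ℝ} {q : ℝ}

/-- By homogeneity all the functions `exp (-t * wsum a q)` with `t ≥ 0` are positive definite;
differentiating their quadratic forms at `t = 0` gives the negative type property. -/
lemma negTypeWsum_of_isPosDefFn (hq : 0 < q)
    (h : IsPosDefFn (fun x : Fin n → ℝ => (Real.exp (-(wsum a q x)) : ℂ))) :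
    NegTypeWsum a q n := by
  intro ι _ y c hc
  have key : ∀ t : ℝ, 0 ≤ t →
      0 ≤ ∑ i, ∑ j, c i * c j * Real.exp (-(t * wsum a q (y i - y j))) := by
    intro t ht
    let e := Fintype.equivFin ι
    have h1 := (h (Fintype.card ι) (fun i => t ^ (1 / q) • y (e.symm i))
      (fun i => (c (e.symm i) : ℂ))).1
    have h2 : ∀ i j, wsum a q (t ^ (1 / q) • y i - t ^ (1 / q) • y j) =
        t * wsum a q (y i - y j) := by
      intro i j
      rw [← smul_sub, wsum_smul a q _ (Real.rpow_nonneg ht _), ← Real.rpow_mul ht,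
        one_div_mul_cancel hq.ne', Real.rpow_one]
    simp only [h2, Complex.conj_ofReal, ← Complex.ofReal_mul, ← Complex.ofReal_sum,
      Complex.ofReal_re] at h1
    rw [e.symm.sum_comp (fun i => ∑ j, c i * c (e.symm j) *
      Real.exp (-(t * wsum a q (y i - y (e.symm j)))))] at h1
    refine h1.trans_eq (Finset.sum_congr rfl fun i _ => ?_)
    exact e.symm.sum_comp (fun j => c i * c j * Real.exp (-(t * wsum a q (y i - y j))))
  set S := ∑ i, ∑ j, c i * c j * wsum a q (y i - y j) with hS
  have hd : HasDerivAt (fun t : ℝ =>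
      ∑ i, ∑ j, c i * c j * Real.exp (-(t * wsum a q (y i - y j)))) (-S) 0 := by
    have : -S = ∑ i, ∑ j, c i * c j * (Real.exp (-(0 * wsum a q (y i - y j))) *
        (-(1 * wsum a q (y i - y j)))) := by
      simp [hS, ← Finset.sum_neg_distrib]
    rw [this]
    refine HasDerivAt.fun_sum fun i _ => HasDerivAt.fun_sum fun j _ => ?_
    exact (((hasDerivAt_id (0 : ℝ)).mul_const _).fun_neg.exp).const_mul _
  have h0 : ∑ i, ∑ j, c i * c j * Real.exp (-(0 * wsum a q (y i - y j))) = 0 := by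
    simp [← Finset.mul_sum, hc]
  have hlim := (hd.tendsto_slope_zero_right)
  have : 0 ≤ -S := by
    refine ge_of_tendsto hlim ?_
    filter_upwards [self_mem_nhdsWithin] with t ht
    have ht : (0 : ℝ) < t := ht
    have := key t ht.le
    simp only [zero_add, h0, sub_zero, smul_eq_mul]
    positivity
  linarith

/-- Testing negative type on the measure `∑ c_i (δ_(0, y_i) - δ_(z, y_i))`, whose total mass is
zero for every `c`, turns the increment in one coordinate into a positive definite function of
the remaining ones. -/
lemma NegTypeWsum.increment (h : NegTypeWsum a q (n + 1)) (z : ℝ) {ι : Type} [Fintype ι]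
    (y : ι → Fin n → ℝ) (c : ι → ℝ) :
    0 ≤ ∑ i, ∑ j, c i * c j * (wsum a q (Fin.cons z (y i - y j) : Fin (n + 1) → ℝ)
      - wsum a q (Fin.cons 0 (y i - y j) : Fin (n + 1) → ℝ)) := by
  have h1 := h (ι × Bool) (fun p => Fin.cons (if p.2 then z else 0) (y p.1))
    (fun p => if p.2 then -c p.1 else c p.1) (by
      simp [Fintype.sum_prod_type])
  have e : ∀ i j s t, (Fin.cons s (y i) : Fin (n + 1) → ℝ) - Fin.cons t (y j) =
      Fin.cons (s - t) (y i - y j) := by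
    intro i j s t
    funext k
    induction k using Fin.cases <;> simp
  have eneg : ∀ i j, wsum a q (Fin.cons (-z) (y i - y j) : Fin (n + 1) → ℝ) =
      wsum a q (Fin.cons z (y i - y j) : Fin (n + 1) → ℝ) := by
    intro i j
    refine wsum_congr_abs a q fun k => ?_
    induction k using Fin.cases <;> simp
  simp only [Fintype.sum_prod_type, Fintype.sum_bool, e, if_true, sub_self, sub_zero, zero_sub,
    eneg, Bool.false_eq_true, if_false, ← Finset.sum_add_distrib] at h1
  have e3 : ∑ i, ∑ j, c i * c j * (wsum a q (Fin.cons z (y i - y j) : Fin (n + 1) → ℝ)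
      - wsum a q (Fin.cons 0 (y i - y j) : Fin (n + 1) → ℝ)) =
      - (1 / 2) * ∑ i, ∑ j, (-c i * -c j * wsum a q (Fin.cons 0 (y i - y j) : Fin (n + 1) → ℝ)
        + -c i * c j * wsum a q (Fin.cons z (y i - y j) : Fin (n + 1) → ℝ)
        + (c i * -c j * wsum a q (Fin.cons z (y i - y j) : Fin (n + 1) → ℝ)
        + c i * c j * wsum a q (Fin.cons 0 (y i - y j) : Fin (n + 1) → ℝ))) := by
    simp only [Finset.mul_sum]
    exact Finset.sum_congr rfl fun i _ => Finset.sum_congr rfl fun j _ => by ring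
  rw [e3]
  have : ∑ i, ∑ j, (-c i * -c j * wsum a q (Fin.cons 0 (y i - y j) : Fin (n + 1) → ℝ)
        + -c i * c j * wsum a q (Fin.cons z (y i - y j) : Fin (n + 1) → ℝ)
        + (c i * -c j * wsum a q (Fin.cons z (y i - y j) : Fin (n + 1) → ℝ)
        + c i * c j * wsum a q (Fin.cons 0 (y i - y j) : Fin (n + 1) → ℝ))) ≤ 0 := by
    refine le_trans (le_of_eq ?_) h1
    exact Finset.sum_congr rfl fun i _ => by
      simp only [Finset.sum_add_distrib]
  linarith

lemma NegTypeWsum.restrict (hq : 0 < q) (h : NegTypeWsum a q (n + 1)) : NegTypeWsum a q n := by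
  intro ι _ y c hc
  have h1 := h ι (fun i => Fin.cons 0 (y i)) c hc
  have e : ∀ i j, wsum a q ((Fin.cons 0 (y i) : Fin (n + 1) → ℝ) - Fin.cons 0 (y j)) =
      wsum a q (y i - y j) := by
    intro i j
    rw [← wsum_cons_zero a hq (y i - y j)]
    congr 1
    funext k
    induction k using Fin.cases <;> simp
  simpa only [e] using h1

lemma NegTypeWsum.restrict_le (hq : 0 < q) {m : ℕ} (hmn : m ≤ n) (h : NegTypeWsum a q n) :
    NegTypeWsum a q m := by
  induction n, hmn using Nat.le_induction with
  | base => exact h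
  | succ n _ ih => exact ih (h.restrict hq)

/-- Letting the distinguished coordinate dominate all the others, the increment becomes a
constant minus the weighted sum of the differences `a_k - a_(k+1)`. -/
lemma NegTypeWsum.diff (hq : 0 < q) (h : NegTypeWsum a q (n + 1)) :
    NegTypeWsum (fun k => a k - a (k + 1)) q n := by
  intro ι _ y c hc
  set z : ℝ := ∑ i, ∑ j, ‖y i - y j‖ with hz
  have hz0 : 0 ≤ z := by positivity
  have hle : ∀ i j k, |(y i - y j) k| ≤ z := by
    intro i j k
    calc |(y i - y j) k| ≤ ‖y i - y j‖ := norm_le_pi_norm (y i - y j) k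
      _ ≤ ∑ j, ‖y i - y j‖ :=
        Finset.single_le_sum (f := fun j => ‖y i - y j‖) (fun _ _ => norm_nonneg _)
          (Finset.mem_univ j)
      _ ≤ z := Finset.single_le_sum (f := fun i => ∑ j, ‖y i - y j‖)
          (fun _ _ => by positivity) (Finset.mem_univ i)
  have h1 := h.increment z y c
  have e : ∀ i j, wsum a q (Fin.cons z (y i - y j) : Fin (n + 1) → ℝ)
      - wsum a q (Fin.cons 0 (y i - y j) : Fin (n + 1) → ℝ) =
      a 1 * z ^ q - wsum (fun k => a k - a (k + 1)) q (y i - y j) := by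
    intro i j
    rw [wsum_cons_of_le a q _ (hle i j) hz0, wsum_cons_zero a hq]
    simp only [wsum, sub_mul, Finset.sum_sub_distrib]
    ring
  simp only [e, mul_sub, Finset.sum_sub_distrib, ← Finset.sum_mul, ← Finset.mul_sum, hc] at h1
  linarith

/-- The test measure `δ_0 - δ_1 + δ_L - δ_(L+1)` against an even function. -/
lemma sum_four_test (g : ℝ → ℝ) (hg : ∀ t, g (-t) = g t) (L : ℝ) :
    ∑ i : Fin 4, ∑ j : Fin 4, (![1, -1, 1, -1] : Fin 4 → ℝ) i * (![1, -1, 1, -1] : Fin 4 → ℝ) j *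
      g ((![0, 1, L, L + 1] : Fin 4 → ℝ) i - (![0, 1, L, L + 1] : Fin 4 → ℝ) j) =
    4 * g 0 - 4 * g 1 + 4 * g L - 2 * g (L - 1) - 2 * g (L + 1) := by
  simp only [Fin.sum_univ_four, Matrix.cons_val_zero, Matrix.cons_val_one, Matrix.cons_val]
  rw [show (0 : ℝ) - 1 = -1 by ring, show (0 : ℝ) - L = -L by ring,
    show (0 : ℝ) - (L + 1) = -(L + 1) by ring, show 1 - L = -(L - 1) by ring,
    show 1 - (L + 1) = -L by ring, show L - (L + 1) = -1 by ring, show L + 1 - 1 = L by ring,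
    show L + 1 - L = 1 by ring]
  simp only [hg, sub_self, sub_zero]
  ring

lemma NegTypeWsum.increment_two (h : NegTypeWsum a q 2) (hq : 0 < q) {z : ℝ} (hz : 0 ≤ z)
    {ι : Type} [Fintype ι] (x : ι → ℝ) (c : ι → ℝ) :
    0 ≤ ∑ i, ∑ j, c i * c j *
      (a 2 * z ^ q + (a 1 - a 2) * (max |x i - x j| z ^ q - |x i - x j| ^ q)) := by
  have h1 := h.increment z (fun i => (![x i] : Fin 1 → ℝ)) c
  refine h1.trans_eq ?_
  refine Finset.sum_congr rfl fun i _ => Finset.sum_congr rfl fun j _ => ?_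
  congr 1
  have e : (![x i] : Fin 1 → ℝ) - ![x j] = ![x i - x j] := by
    funext k; fin_cases k; simp
  rw [e]
  change wsum a q ![z, x i - x j] - wsum a q ![0, x i - x j] = _
  rw [wsum_two, wsum_two]
  simp only [abs_zero, Real.zero_rpow hq.ne', abs_of_nonneg hz]
  rw [max_comm z, max_eq_right (abs_nonneg (x i - x j))]
  ring

lemma NegTypeWsum.two_le (h : NegTypeWsum a q 2) (hq : 0 < q) : a 2 ≤ a 1 := by
  have h1 := h.increment_two hq zero_le_one (![0, 1] : Fin 2 → ℝ) ![1, -1]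
  simp [Fin.sum_univ_two, Real.zero_rpow hq.ne'] at h1
  linarith

/-- If `a_1 > a_2`, the test measure `δ_0 - δ_1 + δ_L - δ_(L+1)` compares the kink of
`(L^q - |x|^q)₊` at `x = L` with the behaviour at `0`. -/
lemma NegTypeWsum.two_bound (h : NegTypeWsum a q 2) (hq : 0 < q) (h12 : a 2 < a 1) {L : ℝ}
    (hL : 1 ≤ L) : L ^ q - (L - 1) ^ q ≤ 2 := by
  have h1 := h.increment_two hq (by linarith : 0 ≤ L) (![0, 1, L, L + 1] : Fin 4 → ℝ)
    ![1, -1, 1, -1]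
  rw [sum_four_test (fun t => a 2 * L ^ q + (a 1 - a 2) * (max |t| L ^ q - |t| ^ q))
    (fun t => by simp only [abs_neg])] at h1
  simp only [abs_zero, abs_one, Real.zero_rpow hq.ne', Real.one_rpow,
    abs_of_nonneg (by linarith : 0 ≤ L), abs_of_nonneg (by linarith : 0 ≤ L - 1),
    abs_of_nonneg (by linarith : 0 ≤ L + 1), max_self, max_eq_right (by linarith : 0 ≤ L),
    max_eq_right hL, max_eq_right (by linarith : L - 1 ≤ L),
    max_eq_left (by linarith : L ≤ L + 1)] at h1
  by_contra! hcon
  nlinarith [mul_pos (sub_pos.2 h12) (sub_pos.2 hcon)]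

lemma NegTypeWsum.two_eq (h : NegTypeWsum a q 2) (hq : 1 < q) : a 1 = a 2 := by
  have hq0 : 0 < q := by linarith
  refine le_antisymm (not_lt.1 fun h12 => ?_) (h.two_le hq0)
  -- `L ^ (q - 1) > 2` contradicts `L ^ q - (L - 1) ^ q ≤ 2`
  obtain ⟨L, hL2, hL1⟩ := ((tendsto_rpow_atTop (by linarith : 0 < q - 1)).eventually_gt_atTop 2
    |>.and (Filter.eventually_ge_atTop 1)).exists
  have hb := h.two_bound hq0 h12 hL1
  have hL0 : 0 < L := by linarith
  have e1 : L ^ q = L ^ (q - 1) * L := by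
    rw [Real.rpow_sub_one hL0.ne']; field_simp
  have e2 : (L - 1) ^ q ≤ L ^ (q - 1) * (L - 1) := by
    rcases hL1.eq_or_lt with rfl | hlt
    · simp [Real.zero_rpow hq0.ne']
    · have h3 : (L - 1) ^ q = (L - 1) ^ (q - 1) * (L - 1) := by
        rw [Real.rpow_sub_one (by linarith)]; field_simp
      rw [h3]
      exact mul_le_mul_of_nonneg_right
        (Real.rpow_le_rpow (by linarith) (by linarith) (by linarith)) (by linarith)
  nlinarith

lemma max_rpow_of_nonneg (hq : 0 < q) {s t : ℝ} (hs : 0 ≤ s) (ht : 0 ≤ t) :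
    max (s ^ q) (t ^ q) = (max s t) ^ q := by
  rcases le_total s t with h | h
  · rw [max_eq_right h, max_eq_right (Real.rpow_le_rpow hs h hq.le)]
  · rw [max_eq_left h, max_eq_left (Real.rpow_le_rpow ht h hq.le)]

lemma NegTypeWsum.increment_three (h : NegTypeWsum a q 3) (hq : 0 < q) {z : ℝ} (hz : 0 ≤ z)
    {ι : Type} [Fintype ι] (x y : ι → ℝ) (c : ι → ℝ) :
    0 ≤ ∑ i, ∑ j, c i * c j *
      (a 3 * z ^ q + (a 2 - a 3) * (max |x i - x j| z ^ q - |x i - x j| ^ q)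
        + (a 2 - a 3) * (max |y i - y j| z ^ q - |y i - y j| ^ q)
        + (a 1 - 2 * a 2 + a 3) * (max (max |x i - x j| |y i - y j|) z ^ q
          - max |x i - x j| |y i - y j| ^ q)) := by
  have h1 := h.increment z (fun i => (![x i, y i] : Fin 2 → ℝ)) c
  refine h1.trans_eq ?_
  refine Finset.sum_congr rfl fun i _ => Finset.sum_congr rfl fun j _ => ?_
  congr 1
  have e : (![x i, y i] : Fin 2 → ℝ) - ![x j, y j] = ![x i - x j, y i - y j] := by
    funext k; fin_cases k <;> simp
  rw [e]
  change wsum a q ![z, x i - x j, y i - y j] - wsum a q ![0, x i - x j, y i - y j] = _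
  rw [wsum_three a hq, wsum_three a hq]
  simp only [abs_zero, abs_of_nonneg hz]
  rw [max_rpow_of_nonneg hq hz (abs_nonneg _), max_rpow_of_nonneg hq hz (abs_nonneg _),
    max_rpow_of_nonneg hq le_rfl (abs_nonneg _), max_rpow_of_nonneg hq le_rfl (abs_nonneg _),
    max_eq_right (abs_nonneg (x i - x j)), max_eq_right (abs_nonneg (y i - y j)),
    max_comm z |x i - x j|, max_comm z |y i - y j|,
    max_comm z (max |x i - x j| |y i - y j|),
    max_eq_right (le_max_of_le_left (abs_nonneg (x i - x j))), Real.zero_rpow hq.ne']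
  ring

/-- Quadratic forms of product measures, summed over the first factor first. -/
lemma sum_prod_test {A S : Type} [Fintype A] [Fintype S] (c : A → ℝ) (e : S → ℝ)
    (G : A → A → S → S → ℝ) :
    ∑ p : A × S, ∑ p' : A × S, (c p.1 * e p.2) * (c p'.1 * e p'.2) * G p.1 p'.1 p.2 p'.2 =
      ∑ s, ∑ s', e s * e s' * ∑ i, ∑ i', c i * c i' * G i i' s s' := by
  simp only [Fintype.sum_prod_type, Finset.mul_sum]
  rw [Finset.sum_comm]
  refine Finset.sum_congr rfl fun s _ => ?_
  rw [Finset.sum_comm]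
  simp only [Finset.sum_comm (s := (Finset.univ : Finset A)) (t := (Finset.univ : Finset S))]
  refine Finset.sum_congr rfl fun s' _ => ?_
  rw [Finset.sum_comm]
  exact Finset.sum_congr rfl fun i _ => Finset.sum_congr rfl fun i' _ => by ring

/-- The four point test in the first variable, applied to `(L^q - max |x| |m|^q)₊` at an
integer `m`. -/
lemma four_test_max (hq : 0 < q) {L : ℕ} (hL : 1 ≤ L) (m : ℤ) (V : ℝ → ℝ)
    (hV : ∀ t, V t = max (max |t| |(m : ℝ)|) L ^ q - max |t| |(m : ℝ)| ^ q) :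
    4 * V 0 - 4 * V 1 + 4 * V L - 2 * V (L - 1) - 2 * V (L + 1) =
      (if m = 0 then 4 else 0)
        - 2 * (if |m| < L then (L : ℝ) ^ q - ((L : ℝ) - 1) ^ q else 0) := by
  have hL1 : (1 : ℝ) ≤ L := by exact_mod_cast hL
  have hzero : ∀ t : ℝ, (L : ℝ) ≤ max |t| |(m : ℝ)| → V t = 0 := by
    intro t ht
    rw [hV, max_eq_left ht, sub_self]
  have hVL : V L = 0 := hzero _ (le_max_of_le_left (le_abs_self _))
  have hVL1 : V (L + 1) = 0 :=
    hzero _ (le_max_of_le_left ((by linarith : (L : ℝ) ≤ L + 1).trans (le_abs_self _)))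
  rw [hVL, hVL1]
  by_cases hm : |m| < L
  · have hm' : |(m : ℝ)| ≤ L - 1 := by
      have : |m| + 1 ≤ (L : ℤ) := hm
      have : ((|m| + 1 : ℤ) : ℝ) ≤ ((L : ℤ) : ℝ) := by exact_mod_cast this
      push_cast at this
      linarith
    have hVm : V (L - 1) = (L : ℝ) ^ q - ((L : ℝ) - 1) ^ q := by
      rw [hV, abs_of_nonneg (by linarith : (0 : ℝ) ≤ L - 1), max_eq_left hm',
        max_eq_right (by linarith : (L : ℝ) - 1 ≤ L)]
    rw [hVm, if_pos hm]
    by_cases h0 : m = 0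
    · subst h0
      rw [hV, hV]
      simp [Real.zero_rpow hq.ne', hL1]
      ring
    · have h1 : (1 : ℝ) ≤ |(m : ℝ)| := by exact_mod_cast Int.one_le_abs h0
      have : V 1 = V 0 := by
        rw [hV, hV, abs_one, abs_zero, max_eq_right h1,
          max_eq_right (abs_nonneg (m : ℝ))]
      rw [this, if_neg h0]
      ring
  · have hm' : (L : ℝ) ≤ |(m : ℝ)| := by exact_mod_cast not_lt.1 hm
    have h0 : m ≠ 0 := by
      rintro rfl
      simp at hm
      omega
    rw [hzero 0 (le_max_of_le_right hm'), hzero 1 (le_max_of_le_right hm'),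
      hzero (L - 1) (le_max_of_le_right hm'), if_neg hm, if_neg h0]
    ring

/-- If `a_1 - 2 a_2 + a_3 > 0`, then the test measure `δ_0 - δ_1 + δ_L - δ_(L+1)` in the first
variable times the difference of the counting measures of two far apart blocks of `L`
consecutive integers in the second one bounds the last increment of `k ↦ k ^ q`. The terms
depending on one variable only cancel; on each block, only the `L` diagonal pairs see the kink
at `0`, whereas all `L ^ 2` pairs see the one at `L`. -/
lemma NegTypeWsum.three_bound (h : NegTypeWsum a q 3) (hq : 0 < q)
    (he : 0 < a 1 - 2 * a 2 + a 3) {L : ℕ} (hL : 1 ≤ L) :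
    ((L : ℝ) ^ q - ((L : ℝ) - 1) ^ q) * L ≤ 2 := by
  have hL1 : (1 : ℝ) ≤ L := by exact_mod_cast hL
  set δ := (L : ℝ) ^ q - ((L : ℝ) - 1) ^ q with hδ
  set e := a 1 - 2 * a 2 + a 3 with hedef
  let u : Fin 4 → ℝ := ![0, 1, L, L + 1]
  let c : Fin 4 → ℝ := ![1, -1, 1, -1]
  let v : Fin L × Bool → ℝ := fun s => (s.1 : ℕ) + if s.2 then 2 * (L : ℝ) else 0
  let σ : Fin L × Bool → ℝ := fun s => if s.2 then 1 else -1
  have h1 := h.increment_three hq (by linarith : (0 : ℝ) ≤ L)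
    (fun p : Fin 4 × (Fin L × Bool) => u p.1) (fun p => v p.2) (fun p => c p.1 * σ p.2)
  rw [sum_prod_test c σ (fun i i' s s' => a 3 * (L : ℝ) ^ q
        + (a 2 - a 3) * (max |u i - u i'| L ^ q - |u i - u i'| ^ q)
        + (a 2 - a 3) * (max |v s - v s'| L ^ q - |v s - v s'| ^ q)
        + e * (max (max |u i - u i'| |v s - v s'|) L ^ q
          - max |u i - u i'| |v s - v s'| ^ q))] at h1
  obtain ⟨K, hK⟩ : ∃ K : ℝ, ∀ s s', ∑ i, ∑ i', c i * c i' * (a 3 * (L : ℝ) ^ q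
        + (a 2 - a 3) * (max |u i - u i'| L ^ q - |u i - u i'| ^ q)
        + (a 2 - a 3) * (max |v s - v s'| L ^ q - |v s - v s'| ^ q)
        + e * (max (max |u i - u i'| |v s - v s'|) L ^ q
          - max |u i - u i'| |v s - v s'| ^ q)) =
      K + e * (if s.2 = s'.2 then (if s.1 = s'.1 then 4 else 0) - 2 * δ else 0) := by
    let W : ℝ → ℝ := fun t => max |t| L ^ q - |t| ^ q
    refine ⟨(a 2 - a 3) * (4 * W 0 - 4 * W 1 + 4 * W L - 2 * W (L - 1) - 2 * W (L + 1)),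
      fun s s' => ?_⟩
    let m : ℤ := ((s.1 : ℕ) : ℤ) + (if s.2 then 2 * (L : ℤ) else 0)
      - (((s'.1 : ℕ) : ℤ) + (if s'.2 then 2 * (L : ℤ) else 0))
    have hm : v s - v s' = (m : ℝ) := by
      simp only [v, m]
      push_cast
      rfl
    rw [sum_four_test (fun t => a 3 * (L : ℝ) ^ q
        + (a 2 - a 3) * (max |t| L ^ q - |t| ^ q)
        + (a 2 - a 3) * (max |v s - v s'| L ^ q - |v s - v s'| ^ q)
        + e * (max (max |t| |v s - v s'|) L ^ q - max |t| |v s - v s'| ^ q))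
      (fun t => by simp only [abs_neg]) L, hm]
    have h4 := four_test_max hq hL m
      (fun t => max (max |t| |(m : ℝ)|) L ^ q - max |t| |(m : ℝ)| ^ q) (fun _ => rfl)
    have h5 : ((if m = 0 then 4 else 0) - 2 * (if |m| < L then δ else 0) : ℝ) =
        (if s.2 = s'.2 then (if s.1 = s'.1 then 4 else 0) - 2 * δ else 0) := by
      obtain ⟨⟨j, hj⟩, b⟩ := s
      obtain ⟨⟨j', hj'⟩, b'⟩ := s'
      have h6 : m = 0 ↔ b = b' ∧ j = j' := by
        cases b <;> cases b' <;> simp [m] <;> omega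
      have h7 : |m| < L ↔ b = b' := by
        cases b <;> cases b' <;> simp [m, abs_lt] <;> omega
      simp only [h6, h7, Fin.mk.injEq]
      by_cases hb : b = b' <;> simp [hb]
    rw [← h5, ← h4]
    simp only [W]
    ring
  simp only [hK] at h1
  have h2 : ∑ s : Fin L × Bool, ∑ s' : Fin L × Bool, σ s * σ s' * (K + e *
      (if s.2 = s'.2 then (if s.1 = s'.1 then 4 else 0) - 2 * δ else 0)) =
      2 * e * (4 * L - 2 * δ * L ^ 2) := by
    simp only [Fintype.sum_prod_type, Fintype.sum_bool, σ]
    simp only [if_true, Bool.false_eq_true, if_false, Bool.true_eq_false]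
    have h3 : ∀ j j' : Fin L, (1 * 1 * (K + e * ((if j = j' then 4 else 0) - 2 * δ))
        + 1 * -1 * (K + e * 0) : ℝ) = e * (if j = j' then 4 else 0) - 2 * δ * e := fun j j' => by ring
    have h4 : ∀ j j' : Fin L, (-1 * 1 * (K + e * 0)
        + -1 * -1 * (K + e * ((if j = j' then 4 else 0) - 2 * δ)) : ℝ) =
        e * (if j = j' then 4 else 0) - 2 * δ * e := fun j j' => by ring
    simp only [h3, h4, Finset.sum_sub_distrib, ← Finset.mul_sum, Finset.sum_add_distrib]
    simp
    ring
  rw [h2] at h1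
  by_contra! hcon
  have h3 : 0 < e * L * (δ * L - 2) :=
    mul_pos (mul_pos he (by linarith)) (by linarith)
  nlinarith

lemma NegTypeWsum.three_eq (h : NegTypeWsum a q 3) (hq : 0 < q) (hq1 : q ≤ 1) :
    a 1 - a 2 = a 2 - a 3 := by
  have h23 := (h.diff hq).two_le hq
  simp only [Nat.reduceAdd] at h23
  refine le_antisymm (not_lt.1 fun hlt => ?_) h23
  have hlim : Filter.Tendsto (fun L : ℕ => q * (L : ℝ) ^ q) Filter.atTop Filter.atTop :=
    ((tendsto_rpow_atTop hq).comp tendsto_natCast_atTop_atTop).const_mul_atTop hq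
  obtain ⟨L, hL2, hL1⟩ := ((hlim.eventually_gt_atTop 2).and
    (Filter.eventually_ge_atTop 1)).exists
  have hb := h.three_bound hq (by linarith) hL1
  have hLr : (1 : ℝ) ≤ L := by exact_mod_cast hL1
  have hL0 : (0 : ℝ) < L := by linarith
  -- Bernoulli: `(1 - 1 / L) ^ q ≤ 1 - q / L`
  have hB := rpow_one_add_le_one_add_mul_self (s := -(1 / (L : ℝ))) (by
    rw [neg_le_neg_iff, div_le_one hL0]; exact hLr) hq.le hq1
  have e1 : ((L : ℝ) - 1) ^ q = (L : ℝ) ^ q * (1 + -(1 / (L : ℝ))) ^ q := by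
    rw [← Real.mul_rpow hL0.le]
    · congr 1
      field_simp
      ring
    · have : 1 / (L : ℝ) ≤ 1 := by rw [div_le_one hL0]; exact hLr
      linarith
  have hp : 0 < (L : ℝ) ^ q := Real.rpow_pos_of_pos hL0 q
  have e2 : ((L : ℝ) - 1) ^ q ≤ (L : ℝ) ^ q * (1 + q * -(1 / (L : ℝ))) := by
    rw [e1]; exact mul_le_mul_of_nonneg_left hB hp.le
  have e3 : ((L : ℝ) ^ q - (L : ℝ) ^ q * (1 + q * -(1 / (L : ℝ)))) * L = q * (L : ℝ) ^ q := by
    field_simp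
    ring
  have e4 := mul_le_mul_of_nonneg_right e2 hL0.le
  nlinarith

lemma NegTypeWsum.eq_succ (hq : 1 < q) (h : NegTypeWsum a q n) :
    ∀ k, 1 ≤ k → k + 1 ≤ n → a k = a (k + 1) := by
  have hq0 : 0 < q := by linarith
  induction n generalizing a with
  | zero => intro k _ _; omega
  | succ n ih =>
    have h1 := ih (h.diff hq0)
    intro k hk1
    -- the differences `a k - a (k + 1)` are all equal, and the first of them vanishes
    induction k, hk1 using Nat.le_induction with
    | base => exact fun hk => (h.restrict_le hq0 hk).two_eq hq
    | succ k hk ihk =>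
      intro hkn
      have h2 := h1 k hk (by omega)
      have h3 := ihk (by omega)
      linarith

lemma NegTypeWsum.sub_eq_sub_succ (hq : 0 < q) (hq1 : q ≤ 1) (h : NegTypeWsum a q n) :
    ∀ k, 1 ≤ k → k + 2 ≤ n → a k - a (k + 1) = a (k + 1) - a (k + 2) := by
  induction n generalizing a with
  | zero => intro k _ _; omega
  | succ n ih =>
    have h1 := ih (h.diff hq)
    intro k hk1
    -- the second differences are all equal, and the first of them vanishes
    induction k, hk1 using Nat.le_induction with
    | base => exact fun hk => (h.restrict_le hq hk).three_eq hq hq1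
    | succ k hk ihk =>
      intro hkn
      have h2 := h1 k hk (by omega)
      have h3 := ihk (by omega)
      linarith

end Necessity

/-! ### Sufficiency -/

section Sufficiency

variable {n : ℕ} {a : ℕ → ℝ} {q : ℝ}

lemma isPosDefFn_of_negTypeKernel
    (h : ∀ (m : ℕ) (y : Fin m → Fin n → ℝ), NegTypeKernel fun i j => wsum a q (y i - y j)) :
    IsPosDefFn (fun x : Fin n → ℝ => (Real.exp (-(wsum a q x)) : ℂ)) := by
  intro m y c
  obtain ⟨hsymm, hpos⟩ := (h m y).exp_neg
  set K : Fin m → Fin m → ℝ := fun i j => Real.exp (-wsum a q (y i - y j)) with hK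
  have hre : (∑ i, ∑ j, c i * (starRingEnd ℂ) (c j) *
      ((Real.exp (-(wsum a q (y i - y j))) : ℝ) : ℂ)).re =
      ∑ i, ∑ j, (c i).re * (c j).re * K i j + ∑ i, ∑ j, (c i).im * (c j).im * K i j := by
    simp only [Complex.re_sum, ← Finset.sum_add_distrib]
    refine Finset.sum_congr rfl fun i _ => Finset.sum_congr rfl fun j _ => ?_
    rw [Complex.re_mul_ofReal]
    simp only [Complex.mul_re, Complex.conj_re, Complex.conj_im, hK]
    ring
  have him : (∑ i, ∑ j, c i * (starRingEnd ℂ) (c j) *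
      ((Real.exp (-(wsum a q (y i - y j))) : ℝ) : ℂ)).im =
      ∑ i, ∑ j, (c i).im * (c j).re * K i j - ∑ i, ∑ j, (c i).re * (c j).im * K i j := by
    simp only [Complex.im_sum, ← Finset.sum_sub_distrib]
    refine Finset.sum_congr rfl fun i _ => Finset.sum_congr rfl fun j _ => ?_
    rw [Complex.im_mul_ofReal]
    simp only [Complex.mul_im, Complex.conj_re, Complex.conj_im, hK]
    ring
  refine ⟨hre ▸ add_nonneg (hpos _) (hpos _), ?_⟩
  rw [him, sub_eq_zero, Finset.sum_comm]
  refine Finset.sum_congr rfl fun i _ => Finset.sum_congr rfl fun j _ => ?_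
  rw [hsymm j i]
  ring

lemma wsum_of_eq {s : ℝ} (h : ∀ k, 1 ≤ k → k ≤ n → a k = s) (x : Fin n → ℝ) :
    wsum a q x = s * ∑ i, |x i| ^ q := by
  rw [← sum_dstar x (fun t => t ^ q), wsum, Finset.mul_sum]
  exact Finset.sum_congr rfl fun i _ => by rw [h _ (by omega) (by omega)]

/-- For an arithmetic progression the weighted sum is a combination of the powers of the
coordinates and of the powers of the pairwise maxima: `x_k^*` is the maximum of its pair with
each of the `n - k` smaller entries. -/
lemma wsum_of_arith (hq : 0 < q) {s d : ℝ}
    (h : ∀ k, 1 ≤ k → k ≤ n → a k = s + ((n : ℝ) - k) * d) (x : Fin n → ℝ) :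
    wsum a q x = s * ∑ i, |x i| ^ q +
      d / 2 * ∑ i, ∑ j ∈ Finset.univ.erase i, (max |x i| |x j|) ^ q := by
  have hdiag : ∑ i, ∑ j ∈ Finset.univ.erase i, (max |x i| |x j|) ^ q =
      ∑ i, ∑ j, (max |x i| |x j|) ^ q - ∑ i, |x i| ^ q := by
    rw [← Finset.sum_sub_distrib]
    refine Finset.sum_congr rfl fun i _ => ?_
    rw [← Finset.add_sum_erase Finset.univ _ (Finset.mem_univ i), max_self]
    ring
  have hanti : Antitone fun i => dstar x i ^ q := fun i j hij =>
    Real.rpow_le_rpow (dstar_nonneg x j) (dstar_antitone x hij) hq.le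
  have hmax := sum_sum_max_of_antitone hanti
  simp only [max_rpow_of_nonneg hq (dstar_nonneg x _) (dstar_nonneg x _)] at hmax
  rw [sum_sum_dstar x (fun t u => max t u ^ q)] at hmax
  rw [hdiag, hmax, ← sum_dstar x (fun t => t ^ q), wsum, Finset.mul_sum,
    ← Finset.sum_sub_distrib, Finset.mul_sum, ← Finset.sum_add_distrib]
  refine Finset.sum_congr rfl fun i _ => ?_
  rw [h _ (by omega) (by omega)]
  push_cast
  ring

lemma negTypeKernel_wsum_of_eq (hq : 0 < q) (hq2 : q ≤ 2) {s : ℝ} (hs : 0 ≤ s)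
    (h : ∀ k, 1 ≤ k → k ≤ n → a k = s) (m : ℕ) (y : Fin m → Fin n → ℝ) :
    NegTypeKernel fun i j => wsum a q (y i - y j) := by
  simp only [wsum_of_eq h, Pi.sub_apply]
  exact (NegTypeKernel.sum _ fun k _ =>
    negTypeKernel_abs_rpow (fun i => y i k) hq hq2).const_mul hs

lemma negTypeKernel_wsum_of_arith (hq : 0 < q) (hq1 : q ≤ 1) {s d : ℝ} (hs : 0 ≤ s)
    (hd : 0 ≤ d) (h : ∀ k, 1 ≤ k → k ≤ n → a k = s + ((n : ℝ) - k) * d) (m : ℕ)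
    (y : Fin m → Fin n → ℝ) :
    NegTypeKernel fun i j => wsum a q (y i - y j) := by
  simp only [wsum_of_arith hq h, Pi.sub_apply]
  refine ((NegTypeKernel.sum _ fun k _ =>
    negTypeKernel_abs_rpow (fun i => y i k) hq (by linarith)).const_mul hs).add
    ((NegTypeKernel.sum _ fun k _ => NegTypeKernel.sum _ fun l _ =>
      negTypeKernel_max_rpow (fun i => y i k) (fun i => y i l) hq hq1).const_mul (by positivity))

end Sufficiency

/-- For `n ≥ 2`, `q ∈ (0,2]` and nonnegative `a 1, …, a n`, the function
`x ↦ exp(−∑ aₖ (xₖ^*)^q)` is positive definite on `ℝⁿ` iff either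
`1 < q ≤ 2` and all the `aₖ` are equal, or `q ≤ 1` and the `aₖ` form a
non-increasing arithmetic progression. -/
theorem stmt6 (n : ℕ) (hn : 2 ≤ n) (q : ℝ) (hq0 : 0 < q) (hq2 : q ≤ 2)
    (a : ℕ → ℝ) (ha : ∀ i, 1 ≤ i → i ≤ n → 0 ≤ a i) :
    IsPosDefFn (fun x : Fin n → ℝ =>
        (Real.exp (-(∑ i : Fin n, a (i.1 + 1) * dstar x i ^ q)) : ℂ)) ↔
      ((1 < q ∧ ∀ i j, 1 ≤ i → i ≤ n → 1 ≤ j → j ≤ n → a i = a j) ∨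
       (q ≤ 1 ∧ ∃ d : ℝ, 0 ≤ d ∧ ∀ k, 1 ≤ k → k + 1 ≤ n → a k - a (k + 1) = d)) := by
  change IsPosDefFn (fun x : Fin n → ℝ => (Real.exp (-(wsum a q x)) : ℂ)) ↔ _
  constructor
  · intro h
    have hneg := negTypeWsum_of_isPosDefFn hq0 h
    rcases lt_or_ge 1 q with hq | hq
    · have hsucc := hneg.eq_succ hq
      have hfirst : ∀ i, 1 ≤ i → i ≤ n → a i = a 1 := by
        intro i hi
        induction i, hi using Nat.le_induction with
        | base => exact fun _ => rfl
        | succ k hk ih => exact fun hkn => (hsucc k hk hkn).symm.trans (ih (by omega))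
      exact Or.inl ⟨hq, fun i j hi hin hj hjn => (hfirst i hi hin).trans (hfirst j hj hjn).symm⟩
    · refine Or.inr ⟨hq, a 1 - a 2, sub_nonneg.2 ((hneg.restrict_le hq0 hn).two_le hq0), ?_⟩
      intro k hk
      induction k, hk using Nat.le_induction with
      | base => exact fun _ => rfl
      | succ k hk ih =>
        exact fun hkn => (hneg.sub_eq_sub_succ hq0 hq k hk hkn).symm.trans (ih (by omega))
  · rintro (⟨hq, h⟩ | ⟨hq, d, hd, h⟩)
    · exact isPosDefFn_of_negTypeKernel (negTypeKernel_wsum_of_eq hq0 hq2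
        (ha 1 le_rfl (by omega)) fun k hk hkn => h k 1 hk hkn le_rfl (by omega))
    · refine isPosDefFn_of_negTypeKernel (negTypeKernel_wsum_of_arith hq0 hq
        (ha n (by omega) le_rfl) hd ?_)
      intro k hk hkn
      induction hkn using Nat.decreasingInduction with
      | self => simp
      | of_succ k hkn ih =>
        have h1 := h k hk hkn
        have h2 := ih (by omega)
        push_cast at h2
        linarith
end

section
/- Let q > 1, n ≥ 2, and let a_1 ≥ a_2 ≥ … ≥ a_n ≥ 0 be real numbers, not all zero, and let N(x) = (a_1 (x_1^*)^q + … + a_n (x_n^*)^q)^{1/q} be the norm of ℓ_{w,q}^n. Then the following are equivalent: (i) a_1 = a_2 = … = a_n; (ii) the space (ℝ^n, N) is smooth, i.e., for every x ∈ ℝ^n with x ≠ 0 there exists exactly one linear functional f : ℝ^n → ℝ with f(x) = N(x) and f(y) ≤ N(y) for all y ∈ ℝ^n. -/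
theorem exists_support {n : ℕ} (q : ℝ) (hq : 1 < q) (w x : Fin n → ℝ) (hw : ∀ i, 0 ≤ w i)
    (hx : ∀ i, x i = 0 → w i = 0) (hS : 0 < ∑ i, w i) :
    ∃ f : (Fin n → ℝ) →ₗ[ℝ] ℝ,
      (∀ y, f y = (∑ i, w i) ^ (1 / q - 1) * ∑ i, w i * (y i / x i)) ∧
      f x = (∑ i, w i) ^ (1 / q) ∧
      ∀ y, f y ≤ (∑ i, w i * |y i / x i| ^ q) ^ (1 / q) := by
  refine ⟨{ toFun := fun y => (∑ i, w i) ^ (1 / q - 1) * ∑ i, w i * (y i / x i)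
            map_add' := ?_
            map_smul' := ?_ }, fun y => rfl, ?_, fun y => ?_⟩
  · intro y z
    simp only [Pi.add_apply, add_div, mul_add, Finset.sum_add_distrib]
  · intro c y
    simp only [Pi.smul_apply, smul_eq_mul, RingHom.id_apply, Finset.mul_sum]
    refine Finset.sum_congr rfl fun i _ => by ring
  · have h : ∑ i, w i * (x i / x i) = ∑ i, w i := by
      refine Finset.sum_congr rfl fun i _ => ?_
      by_cases h : x i = 0
      · simp [hx i h]
      · rw [div_self h, mul_one]
    simp only [LinearMap.coe_mk, AddHom.coe_mk]
    rw [h, Real.rpow_sub_one hS.ne']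
    field_simp
  · simp only [LinearMap.coe_mk, AddHom.coe_mk]
    have hH := Real.inner_le_weight_mul_Lp_of_nonneg Finset.univ hq.le w (fun i => |y i / x i|)
      hw (fun i => abs_nonneg _)
    have h1 : ∑ i, w i * (y i / x i) ≤ ∑ i, w i * |y i / x i| :=
      Finset.sum_le_sum fun i _ => mul_le_mul_of_nonneg_left (le_abs_self _) (hw i)
    calc _ ≤ (∑ i, w i) ^ (1 / q - 1) *
          ((∑ i, w i) ^ (1 - q⁻¹) * (∑ i, w i * |y i / x i| ^ q) ^ q⁻¹) :=
          mul_le_mul_of_nonneg_left (h1.trans hH) (by positivity)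
      _ = _ := by
          rw [← mul_assoc, ← Real.rpow_add hS, one_div]
          simp

theorem antitone_dstar {n : ℕ} (y : Fin n → ℝ) : Antitone (dstar y) := by
  intro i j hij
  have := Tuple.monotone_sort (fun j => -|y j|) hij
  simpa [dstar] using this

/-- The rearrangement inequality for the decreasing weights `b` and the `q`-th powers of `|y|`. -/
theorem sum_perm_le {n : ℕ} (q : ℝ) (hq : 1 < q) (b : Fin n → ℝ) (hb : Antitone b)
    (σ : Equiv.Perm (Fin n)) (y : Fin n → ℝ) :
    ∑ i, b (σ i) * |y i| ^ q ≤ ∑ i, b i * dstar y i ^ q := by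
  have hd : Antitone (fun i => dstar y i ^ q) := fun i j hij =>
    Real.rpow_le_rpow (abs_nonneg _) (antitone_dstar y hij) (by linarith)
  have h := (hb.monovary hd).sum_comp_perm_mul_le_sum_mul
    (σ := (Tuple.sort (fun j => -|y j|)).trans σ)
  rw [← Equiv.sum_comp (Tuple.sort (fun j => -|y j|)) (fun i => b (σ i) * |y i| ^ q)]
  exact h

theorem sum_const_mul_dstar {n : ℕ} (q c : ℝ) (y : Fin n → ℝ) :
    ∑ i, c * dstar y i ^ q = ∑ i, c * |y i| ^ q :=
  Equiv.sum_comp (Tuple.sort (fun j => -|y j|)) (fun i => c * |y i| ^ q)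

theorem sum_abs_rpow_pos {n : ℕ} (q c : ℝ) (hc : 0 < c) (x : Fin n → ℝ) (hx : x ≠ 0) :
    0 < ∑ i, c * |x i| ^ q := by
  obtain ⟨i, hi⟩ := Function.ne_iff.mp hx
  exact Finset.sum_pos' (fun j _ => by positivity)
    ⟨i, Finset.mem_univ _, mul_pos hc (Real.rpow_pos_of_pos (abs_pos.mpr hi) _)⟩

/-- The `ℓ_q` norm has a derivative along each line through a nonzero point. -/
theorem differentiableAt_line {n : ℕ} (q : ℝ) (hq : 1 < q) (c : ℝ) (hc : 0 < c)
    (x v : Fin n → ℝ) (hx : x ≠ 0) :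
    DifferentiableAt ℝ (fun t : ℝ => (∑ i, c * |(x + t • v) i| ^ q) ^ (1 / q)) 0 := by
  refine DifferentiableAt.rpow_const ?_ (Or.inl ?_)
  · refine DifferentiableAt.fun_sum fun i _ => DifferentiableAt.const_mul ?_ c
    have h1 : DifferentiableAt ℝ (fun s : ℝ => |s| ^ q) ((x + (0 : ℝ) • v) i) :=
      (hasDerivAt_abs_rpow _ hq).differentiableAt
    have h2 : DifferentiableAt ℝ (fun t : ℝ => (x + t • v) i) 0 := by
      simp only [Pi.add_apply, Pi.smul_apply, smul_eq_mul]
      fun_prop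
    exact DifferentiableAt.comp (0 : ℝ) h1 h2
  · simpa using (sum_abs_rpow_pos q c hc x hx).ne'

/-- A functional touching `N` from below at `x` is determined along `v` by the derivative of `N`
at `x` in the direction `v`. -/
theorem support_eq_deriv {n : ℕ} (N : (Fin n → ℝ) → ℝ) (x v : Fin n → ℝ)
    (hN : DifferentiableAt ℝ (fun t : ℝ => N (x + t • v)) 0)
    (f : (Fin n → ℝ) →ₗ[ℝ] ℝ) (hfx : f x = N x) (hf : ∀ y, f y ≤ N y) :
    f v = deriv (fun t : ℝ => N (x + t • v)) 0 := by
  have hmin : IsLocalMin (fun t : ℝ => N (x + t • v) - (f x + t * f v)) 0 := by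
    refine Filter.Eventually.of_forall fun t => ?_
    have := hf (x + t • v)
    simp only [map_add, map_smul, smul_eq_mul] at this
    simp only [zero_smul, add_zero, zero_mul]
    linarith
  have hd := hN.hasDerivAt.sub (((hasDerivAt_id (0 : ℝ)).mul_const (f v)).const_add (f x))
  have := hmin.hasDerivAt_eq_zero hd
  linarith

/-- For `q > 1`, `n ≥ 2` and weights `a 1 ≥ … ≥ a n ≥ 0` not all zero, with
`N` the norm of `ℓ_{w,q}^n`, the weights are all equal iff `(ℝⁿ, N)` is
smooth, i.e. every nonzero point has a unique supporting functional. -/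
theorem stmt7 (n : ℕ) (hn : 2 ≤ n) (q : ℝ) (hq : 1 < q) (a : ℕ → ℝ)
    (hmono : ∀ i, 1 ≤ i → i + 1 ≤ n → a (i + 1) ≤ a i)
    (hnonneg : ∀ i, 1 ≤ i → i ≤ n → 0 ≤ a i)
    (hnz : ∃ i, 1 ≤ i ∧ i ≤ n ∧ a i ≠ 0) :
    (∀ i j, 1 ≤ i → i ≤ n → 1 ≤ j → j ≤ n → a i = a j) ↔
      (∀ x : Fin n → ℝ, x ≠ 0 →
        ∃! f : (Fin n → ℝ) →ₗ[ℝ] ℝ,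
          f x = (∑ i : Fin n, a (i.1 + 1) * dstar x i ^ q) ^ (1 / q) ∧
          ∀ y : Fin n → ℝ,
            f y ≤ (∑ i : Fin n, a (i.1 + 1) * dstar y i ^ q) ^ (1 / q)) := by
  have hb0 : ∀ i : Fin n, 0 ≤ a (i.1 + 1) := fun i => hnonneg _ (by omega) (by omega)
  obtain ⟨m, hm1, hmn, hm⟩ := hnz
  constructor
  · intro heq x hx
    have hc : 0 < a m := lt_of_le_of_ne (hnonneg m hm1 hmn) hm.symm
    have hN : ∀ y : Fin n → ℝ,
        ∑ i : Fin n, a (i.1 + 1) * dstar y i ^ q = ∑ i, a m * |y i| ^ q := fun y => by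
      rw [← sum_const_mul_dstar]
      exact Finset.sum_congr rfl fun i _ => by
        rw [heq (i.1 + 1) m (by omega) (by omega) hm1 hmn]
    simp only [hN]
    refine existsUnique_of_exists_of_unique ?_ ?_
    · obtain ⟨f, -, hfx, hf⟩ := exists_support q hq (fun i => a m * |x i| ^ q) x
        (fun i => by positivity)
        (fun i hi => by simp [hi, Real.zero_rpow (by linarith : q ≠ 0)])
        (sum_abs_rpow_pos q _ hc x hx)
      refine ⟨f, hfx, fun y => (hf y).trans ?_⟩
      refine Real.rpow_le_rpow (Finset.sum_nonneg fun i _ => by positivity)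
        (Finset.sum_le_sum fun i _ => ?_) (by positivity)
      rw [mul_assoc]
      refine mul_le_mul_of_nonneg_left ?_ hc.le
      rw [← Real.mul_rpow (abs_nonneg _) (abs_nonneg _), ← abs_mul]
      by_cases h : x i = 0
      · rw [h, zero_mul, abs_zero, Real.zero_rpow (by linarith)]
        positivity
      · rw [mul_div_cancel₀ _ h]
    · rintro f g ⟨hfx, hf⟩ ⟨hgx, hg⟩
      have hd := fun v => differentiableAt_line q hq (a m) hc x v hx
      apply LinearMap.ext
      intro v
      have h := fun v f => support_eq_deriv (fun y => (∑ i, a m * |y i| ^ q) ^ (1 / q)) x v (hd v) f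
      rw [h _ f hfx hf, h _ g hgx hg]
  · intro hsm
    have hanti : Antitone (fun i : Fin n => a (i.1 + 1)) := by
      have key : ∀ d i : ℕ, 1 ≤ i → i + d ≤ n → a (i + d) ≤ a i := by
        intro d
        induction d with
        | zero => intro i _ _; exact le_rfl
        | succ d ih =>
          intro i h1 h2
          exact (hmono (i + d) (by omega) (by omega)).trans (ih i h1 (by omega))
      intro i j hij
      have hij' : i.1 ≤ j.1 := hij
      have := key (j.1 - i.1) (i.1 + 1) (by omega) (by omega)
      rwa [show i.1 + 1 + (j.1 - i.1) = j.1 + 1 by omega] at this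
    have hS : 0 < ∑ i : Fin n, a (i.1 + 1) := by
      refine Finset.sum_pos' (fun i _ => hb0 i) ⟨⟨m - 1, by omega⟩, Finset.mem_univ _, ?_⟩
      simp only [Nat.sub_add_cancel hm1]
      exact lt_of_le_of_ne (hnonneg m hm1 hmn) hm.symm
    have hx : (fun _ => 1 : Fin n → ℝ) ≠ 0 :=
      Function.ne_iff.mpr ⟨⟨0, by omega⟩, one_ne_zero⟩
    have hσS : ∀ σ : Equiv.Perm (Fin n), ∑ i, a ((σ i).1 + 1) = ∑ i : Fin n, a (i.1 + 1) :=
      fun σ => Equiv.sum_comp σ (fun i : Fin n => a (i.1 + 1))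
    have hfun : ∀ σ : Equiv.Perm (Fin n), ∃ f : (Fin n → ℝ) →ₗ[ℝ] ℝ,
        (∀ y, f y = (∑ i : Fin n, a (i.1 + 1)) ^ (1 / q - 1) * ∑ i, a ((σ i).1 + 1) * y i) ∧
        f (fun _ => 1) =
          (∑ i : Fin n, a (i.1 + 1) * dstar (fun _ : Fin n => (1 : ℝ)) i ^ q) ^ (1 / q) ∧
        ∀ y : Fin n → ℝ, f y ≤ (∑ i : Fin n, a (i.1 + 1) * dstar y i ^ q) ^ (1 / q) := by
      intro σ
      obtain ⟨f, hf, hfx, hfy⟩ := exists_support q hq (fun i => a ((σ i).1 + 1))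
        (fun _ => 1) (fun i => hb0 _) (fun i hi => absurd hi one_ne_zero) (by rwa [hσS])
      simp only [hσS, div_one] at hf hfx hfy
      refine ⟨f, hf, ?_, fun y => (hfy y).trans ?_⟩
      · rw [hfx]
        simp [dstar]
      · exact Real.rpow_le_rpow
          (Finset.sum_nonneg fun i _ => mul_nonneg (hb0 _) (by positivity))
          (sum_perm_le q hq _ hanti σ y) (by positivity)
    intro i j hi1 hin hj1 hjn
    let I : Fin n := ⟨i - 1, by omega⟩
    let J : Fin n := ⟨j - 1, by omega⟩
    obtain ⟨f, hf, hfs⟩ := hfun 1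
    obtain ⟨g, hg, hgs⟩ := hfun (Equiv.swap I J)
    have hfg : f = g := (hsm _ hx).unique hfs hgs
    have h := (hf (Pi.single I 1)).symm.trans (hfg ▸ hg (Pi.single I 1))
    have h' := mul_left_cancel₀ (Real.rpow_pos_of_pos hS _).ne' h
    simpa [Pi.single_apply, I, J, Nat.sub_add_cancel hi1, Nat.sub_add_cancel hj1] using h'
end

section
/- For all integers n and m with 2 ≤ m ≤ n, Σ_{j=0}^{m−1} (−1)^j C(n−m+j, j) · C(n−1, n−m+j) = 0, where C(·,·) denotes the binomial coefficient. -/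
/-! With `s = n - m`, symmetry and the subset-of-a-subset identity give
`C(n-1, s+j) C(s+j, j) = C(n-1, s) C(m-1, j)`. The sum is therefore `C(n-1, s)` times the
alternating sum of row `m - 1` of Pascal's triangle, which vanishes because `m - 1 ≠ 0`. -/

/-- For `2 ≤ m ≤ n`, `∑_{j=0}^{m−1} (−1)^j C(n−m+j, j) C(n−1, n−m+j) = 0`. -/
theorem stmt9 (n m : ℕ) (hm : 2 ≤ m) (hmn : m ≤ n) :
    ∑ j ∈ Finset.range m,
        (-1 : ℤ) ^ j * ((n - m + j).choose j) * ((n - 1).choose (n - m + j)) = 0 := by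
  have key : ∀ j, (n - m + j).choose j * (n - 1).choose (n - m + j)
      = (n - 1).choose (n - m) * (m - 1).choose j := by
    intro j
    have h := Nat.choose_mul (n := n - 1) (Nat.le_add_right (n - m) j)
    rw [Nat.choose_symm_add, show n - 1 - (n - m) = m - 1 by omega, Nat.add_sub_cancel_left] at h
    rw [mul_comm, h]
  have h0 := Int.alternating_sum_range_choose_of_ne (n := m - 1) (by omega)
  rw [show m - 1 + 1 = m by omega] at h0
  calc _ = ∑ j ∈ Finset.range m,
        ((n - 1).choose (n - m) : ℤ) * ((-1 : ℤ) ^ j * (m - 1).choose j) := by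
        refine Finset.sum_congr rfl fun j _ => ?_
        rw [mul_assoc, ← Nat.cast_mul, key]
        push_cast
        ring
    _ = 0 := by rw [← Finset.mul_sum, h0, mul_zero]
end

section
/- Let f : ℝ → ℝ be a continuous function with power growth at infinity, i.e., there exist A > 0 and ρ > 0 such that |f(t)| ≤ A(1 + |t|^ρ) for all t ∈ ℝ, let a_1, …, a_n ∈ ℝ, and set c = Σ_{k=1}^n (−1)^{k−1} C(n−1, k−1) a_k. Then for every Schwartz function φ on ℝ^n whose support is compact and disjoint from every coordinate hyperplane {x ∈ ℝ^n : x_k = 0}, one has ∫_{ℝ^n} (Σ_{k=1}^n a_k f(x_k^*)) φ̂(x) dx = c ∫_{ℝ^n} f(max(|x_1|, …, |x_n|)) φ̂(x) dx. (That is, the Fourier transforms of the distributions Σ_k a_k f(x_k^*) and c·f(max(|x_1|,…,|x_n|)) coincide outside the coordinate planes in ℝ^n.) -/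
/-!
The function `f (x_k^*)` is a linear combination of the functions `f (max_{j ∈ S} |x j|)`, where
`S` ranges over the nonempty subsets of the index set (`f_dstar_eq`). For the sorted vector the
maximum over `S` is the entry with least index in `S`, and grouping the subsets by their least
element gives `∑_S f (max_S |x|) X^(#S - 1) = ∑_i f (x_i^*) (X + 1)^(n - i)` (`sum_min_pow`);
substituting `X - 1` for `X` and comparing coefficients yields the expansion. The full index set
occurs in it with coefficient `(-1)^(k-1) C(n-1, k-1)` (`starCoeff_univ`).

The proper subsets contribute nothing to the integral against `φ̂`: if `i ∉ S`, then
`f (max_S |x|)` does not depend on `x i`, while the integral of `φ̂` along each line parallel to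
the `i`-th axis is, by one-dimensional Fourier inversion, `2π` times an integral of `φ` over the
hyperplane `x i = 0`, where `φ` vanishes (`integral_ftransform_slice`,
`integral_mul_ftransform_eq_zero`). Integrability of all the functions involved follows from the
power growth of `f` and the rapid decay of `φ̂` (`integrable_mul_ftransform`).
-/

open MeasureTheory

/-- `max_{i ∈ s} |x i|` (with the convention `0` for `s = ∅`). -/
noncomputable def maxAbsOn {n : ℕ} (x : Fin n → ℝ) (s : Finset (Fin n)) : ℝ :=
  s.fold max 0 (fun i => |x i|)

/-- The Fourier transform `φ̂(ξ) = ∫ e^{i⟨x,ξ⟩} φ(x) dx` on `ℝⁿ`. -/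
noncomputable def ftransform {n : ℕ} (φ : (Fin n → ℝ) → ℂ) (ξ : Fin n → ℝ) : ℂ :=
  ∫ x : Fin n → ℝ, Complex.exp (Complex.I * ((∑ i, x i * ξ i : ℝ) : ℂ)) * φ x

/-! ### Expansion of the order statistics in maxima over subsets -/

open Polynomial in
/-- Generating-function identity obtained by grouping the nonempty subsets `S` by their least
element `i`: if `g S` equals `y (min S)`, then the sets with least element `i` are the
`insert i R` with `R ⊆ Ioi i`, and they contribute `y i * (1 + X) ^ #(Ioi i)`. -/
lemma sum_min_pow {n : ℕ} (g : Finset (Fin n) → ℝ) (y : Fin n → ℝ)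
    (hg : ∀ (i : Fin n) (R : Finset (Fin n)), R ⊆ Finset.Ioi i → g (insert i R) = y i) :
    ∑ S ∈ Finset.univ.filter (fun S : Finset (Fin n) => S.Nonempty),
      C (g S) * (X : ℝ[X]) ^ (S.card - 1) = ∑ i : Fin n, C (y i) * (X + 1) ^ (n - 1 - i.1) := by
  classical
  have key : ∀ i : Fin n, C (y i) * ((X : ℝ[X]) + 1) ^ (n - 1 - i.1) =
      ∑ R ∈ (Finset.Ioi i).powerset, C (g (insert i R)) * X ^ ((insert i R).card - 1) := by
    intro i
    have h := Finset.sum_pow_mul_eq_add_pow (X : ℝ[X]) 1 (Finset.Ioi i)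
    rw [Fin.card_Ioi] at h
    rw [← h, Finset.mul_sum]
    refine Finset.sum_congr rfl fun R hR => ?_
    rw [Finset.mem_powerset] at hR
    have hi : i ∉ R := fun h => by simpa using hR h
    rw [hg i R hR, Finset.card_insert_of_notMem hi]
    simp
  simp_rw [key]
  rw [Finset.sum_sigma']
  symm
  refine Finset.sum_bij (fun p _ => insert p.1 p.2) ?_ ?_ ?_ ?_
  · intro p hp
    simp
  · rintro ⟨i, R⟩ hp ⟨j, Q⟩ hq h
    simp only [Finset.mem_sigma, Finset.mem_univ, true_and, Finset.mem_powerset] at hp hq h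
    have hij : i = j := by
      have h1 : i ∈ insert j Q := h ▸ Finset.mem_insert_self i R
      have h2 : j ∈ insert i R := h ▸ Finset.mem_insert_self j Q
      rcases Finset.mem_insert.1 h1 with h1 | h1
      · exact h1
      rcases Finset.mem_insert.1 h2 with h2 | h2
      · exact h2.symm
      have h3 := Finset.mem_Ioi.1 (hq h1)
      have h4 := Finset.mem_Ioi.1 (hp h2)
      exact absurd h3 h4.asymm
    subst hij
    have hi : i ∉ R := fun h => by simpa using hp h
    have hi' : i ∉ Q := fun h => by simpa using hq h
    rw [← Finset.erase_insert hi, h, Finset.erase_insert hi']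
  · intro S hS
    have hS' : S.Nonempty := by simpa using hS
    refine ⟨⟨S.min' hS', S.erase (S.min' hS')⟩, ?_, Finset.insert_erase (S.min'_mem hS')⟩
    simp only [Finset.mem_sigma, Finset.mem_univ, true_and, Finset.mem_powerset]
    intro j hj
    exact Finset.mem_Ioi.2 (S.min'_lt_of_mem_erase_min' hS' hj)
  · intro p hp
    rfl

/-- The coefficient of `f (max_{j ∈ S} |x j|)` in the expansion `f_dstar_eq` of `f (dstar x i)`:
the coefficient of `X ^ (n - 1 - i)` in `(X - 1) ^ (#S - 1)`. It is used for nonempty `S` only, so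
the truncated subtraction `#S - 1` is a genuine one. -/
noncomputable def starCoeff {n : ℕ} (i : Fin n) (S : Finset (Fin n)) : ℝ :=
  ((Polynomial.X - 1 : Polynomial ℝ) ^ (S.card - 1)).coeff (n - 1 - i.1)

lemma starCoeff_univ {n : ℕ} (i : Fin n) :
    starCoeff i Finset.univ = (-1) ^ i.1 * ((n - 1).choose i.1) := by
  have hi : i.1 ≤ n - 1 := by omega
  unfold starCoeff
  rw [sub_eq_add_neg, ← Polynomial.C_1, ← Polynomial.C_neg, Polynomial.coeff_X_add_C_pow,
    Finset.card_univ, Fintype.card_fin, Nat.sub_sub_self hi, Nat.choose_symm hi]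

lemma maxAbsOn_map {n : ℕ} (x : Fin n → ℝ) (σ : Equiv.Perm (Fin n)) (S : Finset (Fin n)) :
    maxAbsOn x (S.map σ.toEmbedding) = maxAbsOn (fun i => x (σ i)) S := by
  unfold maxAbsOn
  rw [Finset.fold_map]
  rfl

lemma maxAbsOn_le_iff {n : ℕ} (x : Fin n → ℝ) (S : Finset (Fin n)) (c : ℝ) :
    maxAbsOn x S ≤ c ↔ 0 ≤ c ∧ ∀ i ∈ S, |x i| ≤ c := by
  unfold maxAbsOn
  rw [Finset.fold_max_le]

lemma maxAbsOn_nonneg {n : ℕ} (x : Fin n → ℝ) (S : Finset (Fin n)) : 0 ≤ maxAbsOn x S :=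
  ((maxAbsOn_le_iff x S _).1 le_rfl).1

lemma continuous_maxAbsOn {n : ℕ} (S : Finset (Fin n)) :
    Continuous (fun x : Fin n → ℝ => maxAbsOn x S) := by
  classical
  induction S using Finset.induction_on with
  | empty => simpa [maxAbsOn] using continuous_const
  | insert i S hi ih =>
    simp only [maxAbsOn, Finset.fold_insert hi]
    exact ((continuous_apply i).abs).max ih

/-- Inclusion–exclusion: every `f (dstar x i)` is a linear combination, with coefficients that do
not depend on `x` or `f`, of the values of `f` at the maxima of `|x j|` over nonempty subsets. -/
lemma f_dstar_eq {n : ℕ} (f : ℝ → ℝ) (x : Fin n → ℝ) (i : Fin n) :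
    f (dstar x i) = ∑ S ∈ Finset.univ.filter (fun S : Finset (Fin n) => S.Nonempty),
      starCoeff i S * f (maxAbsOn x S) := by
  classical
  set σ := Tuple.sort (fun j => -|x j|) with hσ
  have hanti : Antitone (dstar x) := fun j k hjk => by
    have := Tuple.monotone_sort (fun j => -|x j|) hjk
    exact neg_le_neg_iff.1 this
  have h := sum_min_pow (fun S => f (maxAbsOn (fun i => x (σ i)) S)) (fun i => f (dstar x i)) (by
    intro i R hR
    refine congrArg f (le_antisymm ?_ ?_)
    · rw [maxAbsOn_le_iff]
      refine ⟨abs_nonneg _, fun j hj => ?_⟩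
      rcases Finset.mem_insert.1 hj with rfl | hj
      · exact le_rfl
      · exact hanti (Finset.mem_Ioi.1 (hR hj)).le
    · exact ((maxAbsOn_le_iff (fun i => x (σ i)) _ _).1 le_rfl).2 i (Finset.mem_insert_self _ _))
  -- Substituting `X - 1` for `X` turns the powers of `X + 1` into powers of `X`, so that comparing
  -- coefficients isolates a single `f (dstar x i)`.
  have h2 := congrArg (fun p : Polynomial ℝ => (p.comp (Polynomial.X - 1)).coeff (n - 1 - i.1)) h
  simp only [Polynomial.sum_comp, Polynomial.mul_comp, Polynomial.C_comp,
    Polynomial.pow_comp, Polynomial.X_comp, Polynomial.add_comp, Polynomial.one_comp,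
    sub_add_cancel, Polynomial.finsetSum_coeff, Polynomial.coeff_C_mul,
    Polynomial.coeff_X_pow] at h2
  have h3 : ∑ j : Fin n, f (dstar x j) * (if n - 1 - i.1 = n - 1 - j.1 then (1 : ℝ) else 0) =
      f (dstar x i) := by
    rw [Finset.sum_eq_single i]
    · simp
    · intro j _ hj
      have : n - 1 - i.1 ≠ n - 1 - j.1 := by
        intro h
        apply hj
        ext
        omega
      simp [this]
    · simp
  rw [h3] at h2
  rw [← h2]
  refine Finset.sum_equiv (Equiv.finsetCongr σ) (by simp) ?_
  intro S _
  simp only [Equiv.finsetCongr_apply, maxAbsOn_map, starCoeff, Finset.card_map]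
  exact mul_comm _ _

/-! ### Analytic facts on the Fourier transform -/

open FourierTransform in
/-- `ftransform φ` is Schwartz. Mathlib's Fourier transform lives on inner product spaces and uses
the kernel `exp (-2πi⟨x, ξ⟩)`, hence the passage through `EuclideanSpace` and the rescaling by
`-(2π)⁻¹`. -/
lemma exists_schwartz_ftransform {n : ℕ} (φ : SchwartzMap (Fin n → ℝ) ℂ) :
    ∃ Φ : SchwartzMap (Fin n → ℝ) ℂ, ⇑Φ = ftransform ⇑φ := by
  let e := EuclideanSpace.equiv (Fin n) ℝ
  have hu : (-(2 * Real.pi)⁻¹ : ℝ) ≠ 0 := by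
    have := Real.pi_pos
    simp [this.ne']
  let u : ℝˣ := Units.mk0 _ hu
  let ψ : SchwartzMap (EuclideanSpace ℝ (Fin n)) ℂ :=
    SchwartzMap.compCLMOfContinuousLinearEquiv ℂ e φ
  refine ⟨SchwartzMap.compCLMOfContinuousLinearEquiv ℂ
    (e.symm.trans (ContinuousLinearEquiv.smulLeft u)) (𝓕 ψ), ?_⟩
  ext ξ
  have h1 : (SchwartzMap.compCLMOfContinuousLinearEquiv ℂ
    (e.symm.trans (ContinuousLinearEquiv.smulLeft u)) (𝓕 ψ)) ξ =
      𝓕 (ψ : EuclideanSpace ℝ (Fin n) → ℂ) ((-(2 * Real.pi)⁻¹ : ℝ) • WithLp.toLp 2 ξ) := rfl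
  rw [h1, Real.fourier_eq', ftransform,
    ← (PiLp.volume_preserving_toLp (Fin n)).integral_comp
      (MeasurableEquiv.toLp 2 (Fin n → ℝ)).measurableEmbedding]
  refine integral_congr_ae (Filter.Eventually.of_forall fun x => ?_)
  have h2 : ψ (WithLp.toLp 2 x) = φ x := rfl
  simp only [h2, smul_eq_mul]
  congr 2
  rw [real_inner_smul_right, mul_comm]
  congr 1
  have h3 : -2 * Real.pi * (-(2 * Real.pi)⁻¹ * inner ℝ (WithLp.toLp 2 x) (WithLp.toLp 2 ξ)) =
      inner ℝ (WithLp.toLp 2 x) (WithLp.toLp 2 ξ) := by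
    have := Real.pi_pos.ne'
    field_simp
  rw [h3]
  simp [PiLp.inner_apply, mul_comm]

open FourierTransform in
/-- Fourier inversion at `0` on the line: a function vanishing near `0` whose Fourier transform is
integrable has a Fourier transform of integral `0`. -/
lemma integral_fourier_eq_zero (ψ : ℝ → ℂ) (hψ : Integrable ψ)
    (h0 : ∀ᶠ s in nhds (0 : ℝ), ψ s = 0)
    (hint : Integrable (fun t : ℝ => ∫ s : ℝ, Complex.exp (Complex.I * ((s * t : ℝ) : ℂ)) * ψ s)) :
    ∫ t : ℝ, ∫ s : ℝ, Complex.exp (Complex.I * ((s * t : ℝ) : ℂ)) * ψ s = 0 := by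
  set g : ℝ → ℂ := fun t => ∫ s : ℝ, Complex.exp (Complex.I * ((s * t : ℝ) : ℂ)) * ψ s with hg
  have hc : (-(2 * Real.pi)) ≠ 0 := by
    have := Real.pi_pos
    simp [this.ne']
  have hF : 𝓕 ψ = fun w => g (-(2 * Real.pi) * w) := by
    ext w
    rw [Real.fourier_eq', hg]
    refine integral_congr_ae (Filter.Eventually.of_forall fun s => ?_)
    simp only [smul_eq_mul]
    congr 2
    rw [mul_comm]
    congr 2
    simp
    ring
  have hFi : Integrable (𝓕 ψ) := by
    rw [hF]
    exact hint.comp_mul_left' hc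
  have hcont : ContinuousAt ψ 0 :=
    (continuousAt_const (y := (0 : ℂ))).congr (h0.mono fun s hs => hs.symm)
  have hinv := hψ.fourierInv_fourier_eq hFi hcont
  rw [h0.self_of_nhds, Real.fourierInv_eq] at hinv
  simp only [inner_zero_right, AddChar.map_zero_eq_one, one_smul] at hinv
  rw [hF, Measure.integral_comp_mul_left] at hinv
  simpa [Real.pi_pos.ne'] using hinv

lemma integrable_mul_ftransform {n : ℕ} (f : ℝ → ℝ) (hf : Continuous f)
    (hgrowth : ∃ A ρ : ℝ, 0 < A ∧ 0 < ρ ∧ ∀ t : ℝ, |f t| ≤ A * (1 + |t| ^ ρ))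
    (φ : SchwartzMap (Fin n → ℝ) ℂ) (S : Finset (Fin n)) :
    Integrable (fun x : Fin n → ℝ => ((f (maxAbsOn x S) : ℝ) : ℂ) * ftransform (⇑φ) x) := by
  obtain ⟨Φ, hΦ⟩ := exists_schwartz_ftransform φ
  obtain ⟨A, ρ, hA, hρ, hbd⟩ := hgrowth
  rw [← hΦ]
  set k := ⌈ρ⌉₊
  have h1 : Integrable (fun x => 2 * A * ‖Φ x‖ + A * (‖x‖ ^ k * ‖Φ x‖)) :=
    (Φ.integrable.norm.const_mul _).add ((Φ.integrable_pow_mul volume k).const_mul _)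
  refine h1.mono' ?_ (Filter.Eventually.of_forall fun x => ?_)
  · exact ((Complex.continuous_ofReal.comp (hf.comp (continuous_maxAbsOn S))).mul
      Φ.continuous).aestronglyMeasurable
  · have hm0 := maxAbsOn_nonneg x S
    have hm : maxAbsOn x S ≤ ‖x‖ := by
      rw [maxAbsOn_le_iff]
      exact ⟨norm_nonneg _, fun i _ => norm_le_pi_norm x i⟩
    have hp : maxAbsOn x S ^ ρ ≤ 1 + ‖x‖ ^ k := by
      refine (Real.rpow_le_rpow hm0 hm hρ.le).trans ?_
      rcases le_total ‖x‖ 1 with h | h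
      · have := Real.rpow_le_one (norm_nonneg x) h hρ.le
        have := pow_nonneg (norm_nonneg x) k
        linarith
      · have := Real.rpow_le_rpow_of_exponent_le h (Nat.le_ceil ρ)
        rw [Real.rpow_natCast] at this
        linarith
    have hfx : |f (maxAbsOn x S)| ≤ 2 * A + A * ‖x‖ ^ k := by
      refine (hbd _).trans ?_
      rw [abs_of_nonneg hm0]
      nlinarith
    rw [norm_mul, Complex.norm_real, Real.norm_eq_abs]
    calc _ ≤ (2 * A + A * ‖x‖ ^ k) * ‖Φ x‖ := by gcongr
      _ = _ := by ring

/-! ### Vanishing of the integrals for proper subsets -/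

/-- By Fubini, the restriction of `ftransform φ` to a line parallel to the `i`-th axis is a
one-dimensional Fourier transform, of a function obtained by integrating `φ` against a character
over the hyperplanes `x i = s`. -/
lemma ftransform_insertNth {m : ℕ} (φ : SchwartzMap (Fin (m + 1) → ℝ) ℂ) (i : Fin (m + 1))
    (y : Fin m → ℝ) :
    Integrable (fun s : ℝ => ∫ z : Fin m → ℝ,
      Complex.exp (Complex.I * ((∑ j, z j * y j : ℝ) : ℂ)) * φ (i.insertNth s z)) ∧
    ∀ t : ℝ, ftransform ⇑φ (i.insertNth t y) =
      ∫ s : ℝ, Complex.exp (Complex.I * ((s * t : ℝ) : ℂ)) * ∫ z : Fin m → ℝ,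
        Complex.exp (Complex.I * ((∑ j, z j * y j : ℝ) : ℂ)) * φ (i.insertNth s z) := by
  have he := (volume_preserving_piFinSuccAbove (fun _ : Fin (m + 1) => ℝ) i).symm
  set e := (MeasurableEquiv.piFinSuccAbove (fun _ : Fin (m + 1) => ℝ) i).symm with hedef
  have heq : ∀ p : ℝ × (Fin m → ℝ), e p = i.insertNth p.1 p.2 := fun p => rfl
  have hint : ∀ ξ : Fin (m + 1) → ℝ, Integrable (fun x : Fin (m + 1) → ℝ =>
      Complex.exp (Complex.I * ((∑ j, x j * ξ j : ℝ) : ℂ)) * φ x) := by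
    intro ξ
    refine φ.integrable.norm.mono' ?_ (Filter.Eventually.of_forall fun x => ?_)
    · have : Continuous fun x : Fin (m + 1) → ℝ =>
          Complex.exp (Complex.I * ((∑ j, x j * ξ j : ℝ) : ℂ)) := by fun_prop
      exact (this.mul φ.continuous).aestronglyMeasurable
    · rw [norm_mul, mul_comm Complex.I, Complex.norm_exp_ofReal_mul_I, one_mul]
  have hint2 : ∀ t : ℝ, Integrable (fun p : ℝ × (Fin m → ℝ) =>
      Complex.exp (Complex.I * ((p.1 * t : ℝ) : ℂ)) *
        (Complex.exp (Complex.I * ((∑ j, p.2 j * y j : ℝ) : ℂ)) * φ (i.insertNth p.1 p.2))) := by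
    intro t
    have h := (he.integrable_comp_emb e.measurableEmbedding).2 (hint (i.insertNth t y))
    refine h.congr (Filter.Eventually.of_forall fun p => ?_)
    simp only [Function.comp_apply, heq, Fin.sum_univ_succAbove _ i, Fin.insertNth_apply_same,
      Fin.insertNth_apply_succAbove]
    rw [← mul_assoc, ← Complex.exp_add, ← mul_add, ← Complex.ofReal_add]
  refine ⟨?_, fun t => ?_⟩
  · have h := (hint2 0).integral_prod_left
    simpa using h
  · rw [ftransform, ← he.integral_comp']
    have h := integral_prod _ (hint2 t)
    simp only [integral_const_mul] at h
    rw [← h]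
    refine integral_congr_ae (Filter.Eventually.of_forall fun p => ?_)
    simp only [heq, Fin.sum_univ_succAbove _ i, Fin.insertNth_apply_same,
      Fin.insertNth_apply_succAbove]
    rw [← mul_assoc, ← Complex.exp_add, ← mul_add, ← Complex.ofReal_add]

lemma integral_ftransform_slice {m : ℕ} (φ : SchwartzMap (Fin (m + 1) → ℝ) ℂ)
    (hφ : HasCompactSupport ⇑φ)
    (hsupp : tsupport ⇑φ ⊆ {x : Fin (m + 1) → ℝ | ∀ k, x k ≠ 0}) (i : Fin (m + 1))
    (y : Fin m → ℝ) (hy : Integrable (fun t : ℝ => ftransform ⇑φ (i.insertNth t y))) :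
    ∫ t : ℝ, ftransform ⇑φ (i.insertNth t y) = 0 := by
  obtain ⟨hψ, hF⟩ := ftransform_insertNth φ i y
  simp only [hF] at hy ⊢
  refine integral_fourier_eq_zero _ hψ ?_ hy
  have hK : IsClosed ((fun x : Fin (m + 1) → ℝ => x i) '' tsupport ⇑φ) :=
    (hφ.isCompact.image (continuous_apply i)).isClosed
  have h0 : (0 : ℝ) ∉ (fun x : Fin (m + 1) → ℝ => x i) '' tsupport ⇑φ := by
    rintro ⟨x, hx, hx0⟩
    exact hsupp hx i hx0
  -- `φ` vanishes on a whole slab around the hyperplane `x i = 0`, its support being compact.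
  filter_upwards [hK.isOpen_compl.mem_nhds h0] with s hs
  have : ∀ z : Fin m → ℝ, φ (i.insertNth s z) = 0 := fun z =>
    image_eq_zero_of_notMem_tsupport fun hz => hs ⟨_, hz, Fin.insertNth_apply_same _ _ _⟩
  simp [this]

/-- For `i ∉ S` the function `f (max_{j ∈ S} |x j|)` does not depend on `x i`, so integrating first
in `x i` leaves the integral of `ftransform φ` along a line, which is `0`. -/
lemma integral_mul_ftransform_eq_zero {n : ℕ} (f : ℝ → ℝ) (hf : Continuous f)
    (hgrowth : ∃ A ρ : ℝ, 0 < A ∧ 0 < ρ ∧ ∀ t : ℝ, |f t| ≤ A * (1 + |t| ^ ρ))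
    (φ : SchwartzMap (Fin n → ℝ) ℂ) (hφ : HasCompactSupport ⇑φ)
    (hsupp : tsupport ⇑φ ⊆ {x : Fin n → ℝ | ∀ k, x k ≠ 0})
    (S : Finset (Fin n)) (i : Fin n) (hi : i ∉ S) :
    ∫ x : Fin n → ℝ, ((f (maxAbsOn x S) : ℝ) : ℂ) * ftransform (⇑φ) x = 0 := by
  obtain _ | m := n
  · exact i.elim0
  have he := (volume_preserving_piFinSuccAbove (fun _ : Fin (m + 1) => ℝ) i).symm
  set e := (MeasurableEquiv.piFinSuccAbove (fun _ : Fin (m + 1) => ℝ) i).symm with hedef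
  have heq : ∀ p : ℝ × (Fin m → ℝ), e p = i.insertNth p.1 p.2 := fun p => rfl
  have hG := (he.integrable_comp_emb e.measurableEmbedding).2
    (integrable_mul_ftransform f hf hgrowth φ S)
  obtain ⟨Φ, hΦ⟩ := exists_schwartz_ftransform φ
  have hΦi : Integrable (ftransform ⇑φ) := hΦ ▸ Φ.integrable
  have hslice := ((he.integrable_comp_emb e.measurableEmbedding).2 hΦi).prod_left_ae
  rw [← he.integral_comp']
  have hsymm := integral_prod_symm _ hG
  refine hsymm.trans ?_
  refine integral_eq_zero_of_ae ?_
  filter_upwards [hslice] with y hy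
  have hmax : ∀ t : ℝ, maxAbsOn (i.insertNth t y) S = maxAbsOn (i.insertNth 0 y) S := by
    intro t
    unfold maxAbsOn
    refine Finset.fold_congr fun j hj => ?_
    obtain ⟨k, rfl⟩ := Fin.exists_succAbove_eq (y := i) (x := j) (fun h => hi (h ▸ hj))
    simp
  simp only [Function.comp_apply, heq, hmax, integral_const_mul]
  rw [integral_ftransform_slice φ hφ hsupp i y hy, mul_zero]
  rfl

/-! ### The identity -/

/-- Proposition 1: the Fourier transforms of the distributions `∑ aₖ f(xₖ^*)`
and `c·f(max(|x₁|,…,|x_n|))`, `c = ∑ (−1)^{k−1} C(n−1,k−1) aₖ`, agree outside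
the coordinate planes. -/
theorem stmt13 (n : ℕ) (f : ℝ → ℝ) (hf : Continuous f)
    (hgrowth : ∃ A ρ : ℝ, 0 < A ∧ 0 < ρ ∧ ∀ t : ℝ, |f t| ≤ A * (1 + |t| ^ ρ))
    (a : ℕ → ℝ)
    (φ : SchwartzMap (Fin n → ℝ) ℂ) (hφ : HasCompactSupport ⇑φ)
    (hsupp : tsupport ⇑φ ⊆ {x : Fin n → ℝ | ∀ k, x k ≠ 0}) :
    ∫ x : Fin n → ℝ,
        ((∑ i : Fin n, a (i.1 + 1) * f (dstar x i) : ℝ) : ℂ) * ftransform (⇑φ) x =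
      ((∑ k ∈ Finset.Icc 1 n,
          (-1 : ℝ) ^ (k - 1) * ((n - 1).choose (k - 1)) * a k : ℝ) : ℂ) *
        ∫ x : Fin n → ℝ,
          ((f (maxAbsOn x Finset.univ) : ℝ) : ℂ) * ftransform (⇑φ) x := by
  have hint := integrable_mul_ftransform f hf hgrowth φ
  have hstar : ∀ i : Fin n,
      Integrable (fun x : Fin n → ℝ => ((f (dstar x i) : ℝ) : ℂ) * ftransform (⇑φ) x) ∧
      ∫ x : Fin n → ℝ, ((f (dstar x i) : ℝ) : ℂ) * ftransform (⇑φ) x =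
        (((-1) ^ i.1 * ((n - 1).choose i.1) : ℝ) : ℂ) *
          ∫ x : Fin n → ℝ, ((f (maxAbsOn x Finset.univ) : ℝ) : ℂ) * ftransform (⇑φ) x := by
    intro i
    have hexp : ∀ x : Fin n → ℝ, ((f (dstar x i) : ℝ) : ℂ) * ftransform (⇑φ) x =
        ∑ S ∈ Finset.univ.filter (fun S : Finset (Fin n) => S.Nonempty),
          (starCoeff i S : ℂ) * (((f (maxAbsOn x S) : ℝ) : ℂ) * ftransform (⇑φ) x) := by
      intro x
      rw [f_dstar_eq f, Complex.ofReal_sum, Finset.sum_mul]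
      refine Finset.sum_congr rfl fun S _ => ?_
      rw [Complex.ofReal_mul, mul_assoc]
    simp only [hexp]
    refine ⟨integrable_finsetSum _ fun S _ => (hint S).const_mul _, ?_⟩
    rw [integral_finsetSum _ fun S _ => (hint S).const_mul _]
    simp only [integral_const_mul]
    rw [Finset.sum_eq_single Finset.univ, starCoeff_univ]
    · intro S _ hS
      obtain ⟨j, hj⟩ := not_forall.1 (mt Finset.eq_univ_iff_forall.2 hS)
      rw [integral_mul_ftransform_eq_zero f hf hgrowth φ hφ hsupp S j hj, mul_zero]
    · intro h
      exact absurd (by simpa using ⟨i, Finset.mem_univ i⟩) h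
  have hL : ∀ x : Fin n → ℝ,
      ((∑ i : Fin n, a (i.1 + 1) * f (dstar x i) : ℝ) : ℂ) * ftransform (⇑φ) x =
        ∑ i : Fin n, (a (i.1 + 1) : ℂ) * (((f (dstar x i) : ℝ) : ℂ) * ftransform (⇑φ) x) := by
    intro x
    rw [Complex.ofReal_sum, Finset.sum_mul]
    refine Finset.sum_congr rfl fun i _ => ?_
    rw [Complex.ofReal_mul, mul_assoc]
  simp only [hL]
  rw [integral_finsetSum _ fun i _ => (hstar i).1.const_mul _]
  simp only [integral_const_mul, (hstar _).2]
  have hc : ∑ k ∈ Finset.Icc 1 n, (-1 : ℝ) ^ (k - 1) * ((n - 1).choose (k - 1)) * a k =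
      ∑ i : Fin n, (-1 : ℝ) ^ i.1 * ((n - 1).choose i.1) * a (i.1 + 1) := by
    rw [Fin.sum_univ_eq_sum_range
      (fun i => (-1 : ℝ) ^ i * ((n - 1).choose i) * a (i + 1)), Finset.range_eq_Ico]
    exact (Finset.sum_Ico_add'
      (fun k => (-1 : ℝ) ^ (k - 1) * ((n - 1).choose (k - 1)) * a k) 0 n 1).symm
  rw [hc, Complex.ofReal_sum, Finset.sum_mul]
  refine Finset.sum_congr rfl fun i _ => ?_
  push_cast
  ring
end

section
/- Let q > 0 be a real number that is not an even integer, and define F_q : G → ℝ (G ⊂ ℝ³) by F_q(ξ₁,ξ₂,ξ₃) = −(c_q/(2ξ₁ξ₂ξ₃)) ( |ξ₁+ξ₂+ξ₃|^{−q} sgn(ξ₁+ξ₂+ξ₃) − |ξ₁+ξ₂−ξ₃|^{−q} sgn(ξ₁+ξ₂−ξ₃) − |ξ₁−ξ₂+ξ₃|^{−q} sgn(ξ₁−ξ₂+ξ₃) + |ξ₁−ξ₂−ξ₃|^{−q} sgn(ξ₁−ξ₂−ξ₃) ). Then F_q changes sign on G; in fact the points (3,1,1) and (3,2,2) lie in G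 and F_q(3,1,1) · F_q(3,2,2) < 0. -/
/-!
Up to the factor `-c_q / (2 ξ₁ξ₂ξ₃)`, whose sign is that of `-c_q` at both points, `F_q` equals
`5^{-q} - 2·3^{-q} + 1` at `(3,1,1)` and `7^{-q} - 2·3^{-q} - 1` at `(3,2,2)`. The first is positive
because `5^{-q} > 9^{-q} = (3^{-q})²`, so that it exceeds `(1 - 3^{-q})²`; the second is negative
because `7^{-q} < 1`. Since `q` is not an even integer, `-q/2` is not a pole of `Γ`, hence
`c_q ≠ 0` and the product of the two values is strictly negative.
-/

/-- The set `G ⊂ ℝ³` of `ξ` with all `ξ k ≠ 0` and `δ₁ξ₁ + δ₂ξ₂ + δ₃ξ₃ ≠ 0`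
for all choices of signs `δₖ = ±1`. -/
def Gset3 : Set (Fin 3 → ℝ) :=
  {ξ | (∀ k, ξ k ≠ 0) ∧
    ∀ δ : Fin 3 → Bool, (∑ i, (if δ i then (1:ℝ) else -1) * ξ i) ≠ 0}

/-- The constant `c_q = 2^{q+1} π^{1/2} Γ((q+1)/2) / Γ(−q/2)`. -/
noncomputable def cq (q : ℝ) : ℝ :=
  2 ^ (q + 1) * Real.sqrt Real.pi * Real.Gamma ((q + 1) / 2) / Real.Gamma (-q / 2)

/-- The function `F_q` of Corollary 1. -/
noncomputable def Fq (q : ℝ) (ξ : Fin 3 → ℝ) : ℝ :=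
  -(cq q / (2 * (ξ 0 * ξ 1 * ξ 2))) *
    (|ξ 0 + ξ 1 + ξ 2| ^ (-q) * Real.sign (ξ 0 + ξ 1 + ξ 2)
      - |ξ 0 + ξ 1 - ξ 2| ^ (-q) * Real.sign (ξ 0 + ξ 1 - ξ 2)
      - |ξ 0 - ξ 1 + ξ 2| ^ (-q) * Real.sign (ξ 0 - ξ 1 + ξ 2)
      + |ξ 0 - ξ 1 - ξ 2| ^ (-q) * Real.sign (ξ 0 - ξ 1 - ξ 2))

lemma cq_ne_zero (q : ℝ) (hq : 0 < q) (hqe : ∀ m : ℕ, q ≠ 2 * m) : cq q ≠ 0 := by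
  have h1 : Real.Gamma (-q / 2) ≠ 0 := by
    apply Real.Gamma_ne_zero
    intro m hm
    exact hqe m (by linarith)
  have h2 : 0 < Real.Gamma ((q + 1) / 2) := Real.Gamma_pos_of_pos (by linarith)
  have h3 : 0 < Real.sqrt Real.pi := Real.sqrt_pos.mpr Real.pi_pos
  have h4 : (0:ℝ) < 2 ^ (q + 1) := by positivity
  unfold cq
  exact div_ne_zero (by positivity) h1

lemma Fq_three_one_one (q : ℝ) :
    Fq q ![3, 1, 1] = -(cq q / 6) * ((5:ℝ) ^ (-q) - 2 * (3:ℝ) ^ (-q) + 1) := by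
  have e1 : (3:ℝ) + 1 + 1 = 5 := by norm_num
  have e2 : (3:ℝ) + 1 - 1 = 3 := by norm_num
  have e3 : (3:ℝ) - 1 + 1 = 3 := by norm_num
  have e4 : (3:ℝ) - 1 - 1 = 1 := by norm_num
  simp only [Fq, Matrix.cons_val]
  rw [e1, e2, e3, e4, Real.sign_of_pos (by norm_num : (0:ℝ) < 5),
    Real.sign_of_pos (by norm_num : (0:ℝ) < 3), Real.sign_of_pos (by norm_num : (0:ℝ) < 1),
    abs_of_pos (by norm_num : (0:ℝ) < 5), abs_of_pos (by norm_num : (0:ℝ) < 3), abs_one,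
    Real.one_rpow]
  ring

lemma Fq_three_two_two (q : ℝ) :
    Fq q ![3, 2, 2] = -(cq q / 24) * ((7:ℝ) ^ (-q) - 2 * (3:ℝ) ^ (-q) - 1) := by
  have e1 : (3:ℝ) + 2 + 2 = 7 := by norm_num
  have e2 : (3:ℝ) + 2 - 2 = 3 := by norm_num
  have e3 : (3:ℝ) - 2 + 2 = 3 := by norm_num
  have e4 : (3:ℝ) - 2 - 2 = -1 := by norm_num
  simp only [Fq, Matrix.cons_val]
  rw [e1, e2, e3, e4, Real.sign_of_pos (by norm_num : (0:ℝ) < 7),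
    Real.sign_of_pos (by norm_num : (0:ℝ) < 3), Real.sign_of_neg (by norm_num : (-1:ℝ) < 0),
    abs_of_pos (by norm_num : (0:ℝ) < 7), abs_of_pos (by norm_num : (0:ℝ) < 3), abs_neg, abs_one,
    Real.one_rpow]
  ring

lemma bracket_three_one_one_pos (q : ℝ) (hq : 0 < q) :
    0 < (5:ℝ) ^ (-q) - 2 * (3:ℝ) ^ (-q) + 1 := by
  have h9 : (9:ℝ) ^ (-q) = (3:ℝ) ^ (-q) * (3:ℝ) ^ (-q) := by
    rw [← Real.mul_rpow (by norm_num) (by norm_num)]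
    norm_num
  have h5 : (9:ℝ) ^ (-q) < (5:ℝ) ^ (-q) :=
    Real.rpow_lt_rpow_of_neg (by norm_num) (by norm_num) (by linarith)
  nlinarith [sq_nonneg (1 - (3:ℝ) ^ (-q))]

lemma bracket_three_two_two_neg (q : ℝ) (hq : 0 < q) :
    (7:ℝ) ^ (-q) - 2 * (3:ℝ) ^ (-q) - 1 < 0 := by
  have h7 : (7:ℝ) ^ (-q) < 1 :=
    Real.rpow_lt_one_of_one_lt_of_neg (by norm_num) (by linarith)
  have h3 : (0:ℝ) < (3:ℝ) ^ (-q) := by positivity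
  linarith

/-- `F_q` changes sign on `G`: the points `(3,1,1)` and `(3,2,2)` lie in `G`
and `F_q` takes values of opposite signs there. -/
theorem stmt16 (q : ℝ) (hq : 0 < q) (hqe : ∀ m : ℕ, q ≠ 2 * m) :
    (![3, 1, 1] : Fin 3 → ℝ) ∈ Gset3 ∧ (![3, 2, 2] : Fin 3 → ℝ) ∈ Gset3 ∧
      Fq q ![3, 1, 1] * Fq q ![3, 2, 2] < 0 := by
  refine ⟨⟨?_, ?_⟩, ⟨?_, ?_⟩, ?_⟩
  · intro k
    fin_cases k <;> simp
  · intro δ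
    simp only [Fin.sum_univ_three, Matrix.cons_val]
    split_ifs <;> norm_num
  · intro k
    fin_cases k <;> simp
  · intro δ
    simp only [Fin.sum_univ_three, Matrix.cons_val]
    split_ifs <;> norm_num
  · rw [Fq_three_one_one, Fq_three_two_two]
    have hc : 0 < cq q ^ 2 / 144 := by
      have := cq_ne_zero q hq hqe
      positivity
    have hAB := mul_neg_of_pos_of_neg hc (mul_neg_of_pos_of_neg
      (bracket_three_one_one_pos q hq) (bracket_three_two_two_neg q hq))
    linear_combination hAB
end
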